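/- arXiv:2107.10736 — 4 statements merged into one kernel-verified Lean document; each statement's English description precedes it below -/
import Mathlib

section
/- There exists a constant C > 0 such that for every integer n ≥ 1, every t ∈ (−1,1], and every λ ∈ ℂ with (2n−1)² ≤ Re λ < (2n+1)², the sum over all k ∈ ℤ \ B(n) of 1/|λ − (2k+t)²| is finite and less than C, where B(n) = {n−1, −(n−1), n, −n, n+1, −(n+1)}. -/
open MeasureTheory Set Filter Topology Metric

open scoped Classical

noncomputable section

/-- The Bloch phase factor `e^{iπt}`. -/
def blochPhase (t : ℝ) : ℂ := Complex.exp (Complex.I * Real.pi * t)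

/-- `Ψ` is a Bloch function of `L_t(Q)` with Bloch eigenvalue `lam`:
nonzero, twice continuously differentiable, satisfies `-Ψ'' + QΨ = lam Ψ`
and `Ψ(x+π) = e^{iπt} Ψ(x)`. -/
def IsBlochPair {m : ℕ} (Q : ℝ → Matrix (Fin m) (Fin m) ℂ) (t : ℝ) (lam : ℂ)
    (Ψ : ℝ → Fin m → ℂ) : Prop :=
  Ψ ≠ 0 ∧ ContDiff ℝ 2 Ψ ∧
    (∀ x : ℝ, -(deriv (deriv Ψ) x) + (Q x).mulVec (Ψ x) = lam • Ψ x) ∧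
    (∀ x : ℝ, Ψ (x + Real.pi) = blochPhase t • Ψ x)

/-- `lam` is a Bloch eigenvalue of `L_t(Q)`. -/
def IsBlochEigenvalue {m : ℕ} (Q : ℝ → Matrix (Fin m) (Fin m) ℂ) (t : ℝ) (lam : ℂ) : Prop :=
  ∃ Ψ, IsBlochPair Q t lam Ψ

/-- `Ψ` is normalized: `∫₀^π |Ψ(x)|² dx = 1` (Euclidean norm on `ℂ^m`). -/
def IsNormalized {m : ℕ} (Ψ : ℝ → Fin m → ℂ) : Prop :=
  (∫ x in (0:ℝ)..Real.pi, ∑ i, ‖Ψ x i‖ ^ 2) = 1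

/-- The index set `A(k,t)`. -/
def Akt (k : ℤ) (t : ℝ) : Set ℤ :=
  if t ∈ Set.Ioo (-(2:ℝ)/3) (-(1:ℝ)/3) ∪ Set.Ioo ((1:ℝ)/3) ((2:ℝ)/3) then {k}
  else if t ∈ Set.Ioo (-(1:ℝ)/3) ((1:ℝ)/3) then {k, -k}
  else if t ∈ Set.Ioc ((2:ℝ)/3) 1 then {k, -k - 1}
  else if t ∈ Set.Ioo (-1 : ℝ) (-(2:ℝ)/3) then {k, -k + 1}
  else ∅

/-- The spectrum of `L(Q)`: the set of Bloch eigenvalues of `L_t(Q)` for some `t ∈ (-1,1]`. -/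
def SpecLQ {m : ℕ} (Q : ℝ → Matrix (Fin m) (Fin m) ℂ) : Set ℂ :=
  {lam | ∃ t ∈ Set.Ioc (-1:ℝ) 1, IsBlochEigenvalue Q t lam}

/-- The index set `B(n) = {n-1, -(n-1), n, -n, n+1, -(n+1)}`. -/
def Bset (n : ℤ) : Set ℤ := {n - 1, -(n - 1), n, -n, n + 1, -(n + 1)}

/-!
For `x, y ≥ 0` one has `|x² - y²| ≥ (x - y)²`, so it suffices to separate `√(Re λ)` from
`|2k + t|`. The former lies within `1` of `2n` and the latter within `|t|` of `2|k|`, while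
`k ∉ B(n)` means that `||k| - n| ≥ 2`. Hence for `|t| < 3` the two stay apart by a fixed multiple
of `||k| - n|`, and the sum is dominated by two translates of `∑ 1 / j²`, whose total does not
depend on `n`. At `t = 3` this breaks down: `k = n - 2` then hits the left end `λ = (2n - 1)²`.
-/

section RealInequalities

lemma sub_sq_le_abs_sq_sub_sq {x y : ℝ} (hx : 0 ≤ x) (hy : 0 ≤ y) :
    (x - y) ^ 2 ≤ |x ^ 2 - y ^ 2| := by
  have abs_sub_le_add : |x - y| ≤ x + y := abs_sub_le_iff.mpr ⟨by linarith, by linarith⟩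
  calc (x - y) ^ 2 = |x - y| * |x - y| := by rw [← sq, sq_abs]
    _ ≤ (x + y) * |x - y| := by gcongr
    _ = |x ^ 2 - y ^ 2| := by rw [sq_sub_sq, abs_mul, abs_of_nonneg (add_nonneg hx hy)]

lemma abs_sqrt_sub_le {x a r : ℝ} (har : 0 ≤ a + r) (hlower : (a - r) ^ 2 ≤ x)
    (hupper : x ≤ (a + r) ^ 2) : |√x - a| ≤ r := by
  have sqrt_le : √x ≤ a + r := Real.sqrt_le_iff.mpr ⟨har, hupper⟩
  have le_sqrt : a - r ≤ √x := (le_abs_self _).trans (Real.abs_le_sqrt hlower)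
  exact abs_sub_le_iff.mpr ⟨by linarith, by linarith⟩

lemma abs_abs_two_mul_add_sub_le (a t : ℝ) : |(|2 * a + t| - 2 * |a|)| ≤ |t| := by
  simpa [abs_mul] using abs_abs_sub_abs_le (2 * a + t) (2 * a)

lemma mul_abs_sub_le_abs_sub {p m μ y r : ℝ} (hμ : |μ - 2 * m| ≤ 1) (hy : |y - 2 * p| ≤ r)
    (hpm : 2 ≤ |p - m|) : (3 - r) / 2 * |p - m| ≤ |μ - y| := by
  have triangle : 2 * |p - m| ≤ r + |μ - y| + 1 :=
    calc 2 * |p - m| = |2 * p - 2 * m| := by rw [← mul_sub, abs_mul, abs_two]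
      _ ≤ |2 * p - y| + |y - μ| + |μ - 2 * m| :=
        (abs_sub_le _ μ _).trans (add_le_add_left (abs_sub_le _ y _) _)
      _ ≤ r + |μ - y| + 1 := by
        rw [abs_sub_comm (2 * p), abs_sub_comm y μ]
        gcongr
  have slack : 0 ≤ (1 + r) * (|p - m| - 2) :=
    mul_nonneg (by linarith [abs_nonneg (y - 2 * p)]) (sub_nonneg.mpr hpm)
  linarith

lemma one_div_abs_sub_sq_le (a m : ℝ) :
    1 / (|a| - m) ^ 2 ≤ 1 / (a - m) ^ 2 + 1 / (a + m) ^ 2 := by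
  rcases abs_choice a with h | h <;> rw [h]
  · exact le_add_of_nonneg_right (by positivity)
  · rw [show (-a - m) ^ 2 = (a + m) ^ 2 by ring]
    exact le_add_of_nonneg_left (by positivity)

end RealInequalities

section Summation

lemma summable_subtype_and_tsum_subtype_le {ι : Type*} {p : ι → Prop} {f g : ι → ℝ} {a : ℝ}
    (hf : ∀ i, p i → 0 ≤ f i) (hfg : ∀ i, p i → f i ≤ g i) (hg : ∀ i, 0 ≤ g i) (ha : HasSum g a) :
    Summable (fun i : {i // p i} => f i) ∧ ∑' i : {i // p i}, f i ≤ a := by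
  have summable_g : Summable (fun i : {i // p i} => g i) := ha.summable.subtype {i | p i}
  have summable_f : Summable (fun i : {i // p i} => f i) :=
    .of_nonneg_of_le (fun i => hf i i.2) (fun i => hfg i i.2) summable_g
  refine ⟨summable_f, ?_⟩
  calc ∑' i : {i // p i}, f i ≤ ∑' i : {i // p i}, g i :=
        summable_f.tsum_le_tsum (fun i => hfg i i.2) summable_g
    _ ≤ ∑' i, g i := ha.summable.tsum_subtype_le g {i | p i} hg
    _ = a := ha.tsum_eq

lemma hasSum_sub_right_add_add_right {G M : Type*} [AddGroup G] [AddCommMonoid M]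
    [TopologicalSpace M] [ContinuousAdd M] {g : G → M} {a : M} (hg : HasSum g a) (n : G) :
    HasSum (fun k => g (k - n) + g (k + n)) (a + a) :=
  ((Equiv.subRight n).hasSum_iff.mpr hg).add ((Equiv.addRight n).hasSum_iff.mpr hg)

end Summation

section ResolventSum

variable {n : ℤ} {t : ℝ} {lam : ℂ}

lemma two_le_abs_abs_sub_of_notMem_Bset {k : ℤ} (hn : 0 ≤ n) (hk : k ∉ Bset n) :
    2 ≤ |(|k| - n)| := by
  simp only [Bset, Set.mem_insert_iff, Set.mem_singleton_iff, not_or] at hk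
  grind

lemma sq_mul_abs_sub_le_norm_sub {a m : ℝ} (hlower : (2 * m - 1) ^ 2 ≤ lam.re)
    (hupper : lam.re ≤ (2 * m + 1) ^ 2) (ht : |t| ≤ 3) (ham : 2 ≤ |(|a| - m)|) :
    ((3 - |t|) / 2 * |(|a| - m)|) ^ 2 ≤ ‖lam - (((2 * a + t) ^ 2 : ℝ) : ℂ)‖ := by
  have re_nonneg : 0 ≤ lam.re := (sq_nonneg _).trans hlower
  have hm : 0 ≤ 2 * m + 1 := by linarith [hlower.trans hupper]
  have gap : (3 - |t|) / 2 * |(|a| - m)| ≤ |√lam.re - (|2 * a + t|)| :=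
    mul_abs_sub_le_abs_sub (abs_sqrt_sub_le hm hlower hupper) (abs_abs_two_mul_add_sub_le a t) ham
  have gap_lower_nonneg : 0 ≤ (3 - |t|) / 2 * |(|a| - m)| :=
    mul_nonneg (by linarith) (abs_nonneg _)
  calc ((3 - |t|) / 2 * |(|a| - m)|) ^ 2
      ≤ |√lam.re - (|2 * a + t|)| ^ 2 := pow_le_pow_left₀ gap_lower_nonneg gap 2
    _ = (√lam.re - |2 * a + t|) ^ 2 := sq_abs _
    _ ≤ |√lam.re ^ 2 - |2 * a + t| ^ 2| :=
        sub_sq_le_abs_sq_sub_sq (Real.sqrt_nonneg _) (abs_nonneg _)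
    _ = |(lam - (((2 * a + t) ^ 2 : ℝ) : ℂ)).re| := by
        rw [Real.sq_sqrt re_nonneg, sq_abs, Complex.sub_re, Complex.ofReal_re]
    _ ≤ ‖lam - (((2 * a + t) ^ 2 : ℝ) : ℂ)‖ := Complex.abs_re_le_norm _

lemma one_div_norm_sub_le {a m : ℝ} (hlower : (2 * m - 1) ^ 2 ≤ lam.re)
    (hupper : lam.re ≤ (2 * m + 1) ^ 2) (ht : |t| < 3) (ham : 2 ≤ |(|a| - m)|) :
    1 / ‖lam - (((2 * a + t) ^ 2 : ℝ) : ℂ)‖ ≤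
      (2 / (3 - |t|)) ^ 2 * (1 / (a - m) ^ 2 + 1 / (a + m) ^ 2) := by
  have ht_sub : 0 < 3 - |t| := sub_pos.mpr ht
  have ham_pos : 0 < |(|a| - m)| := by linarith
  calc 1 / ‖lam - (((2 * a + t) ^ 2 : ℝ) : ℂ)‖
      ≤ 1 / ((3 - |t|) / 2 * |(|a| - m)|) ^ 2 :=
        one_div_le_one_div_of_le (pow_pos (mul_pos (half_pos ht_sub) ham_pos) 2)
          (sq_mul_abs_sub_le_norm_sub hlower hupper ht.le ham)
    _ = (2 / (3 - |t|)) ^ 2 * (1 / (|a| - m) ^ 2) := by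
        rw [mul_pow, sq_abs, one_div, mul_inv, ← inv_pow, inv_div, one_div]
    _ ≤ (2 / (3 - |t|)) ^ 2 * (1 / (a - m) ^ 2 + 1 / (a + m) ^ 2) := by
        gcongr
        exact one_div_abs_sub_sq_le a m

lemma summable_one_div_norm_sub_and_tsum_le (ht : |t| < 3)
    (hlower : (2 * (n : ℝ) - 1) ^ 2 ≤ lam.re) (hupper : lam.re ≤ (2 * (n : ℝ) + 1) ^ 2) :
    Summable (fun k : {k : ℤ // k ∉ Bset n} =>
      1 / ‖lam - (((2 * ((k : ℤ) : ℝ) + t) ^ 2 : ℝ) : ℂ)‖) ∧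
    ∑' k : {k : ℤ // k ∉ Bset n}, 1 / ‖lam - (((2 * ((k : ℤ) : ℝ) + t) ^ 2 : ℝ) : ℂ)‖ ≤
      (2 / (3 - |t|)) ^ 2 * (2 * ∑' j : ℤ, 1 / (j : ℝ) ^ 2) := by
  have hn_real : (0 : ℝ) ≤ n := by linarith [hlower.trans hupper]
  have hn : 0 ≤ n := mod_cast hn_real
  have hasSum_inv_sq : HasSum (fun j : ℤ => 1 / (j : ℝ) ^ 2) (∑' j : ℤ, 1 / (j : ℝ) ^ 2) :=
    (Real.summable_one_div_int_pow.mpr one_lt_two).hasSum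
  have hasSum_majorant :=
    (hasSum_sub_right_add_add_right hasSum_inv_sq n).mul_left ((2 / (3 - |t|)) ^ 2)
  rw [← two_mul] at hasSum_majorant
  have termwise_le (k : ℤ) (hk : k ∉ Bset n) :
      1 / ‖lam - (((2 * (k : ℝ) + t) ^ 2 : ℝ) : ℂ)‖ ≤ (2 / (3 - |t|)) ^ 2 *
        (1 / ((k - n : ℤ) : ℝ) ^ 2 + 1 / ((k + n : ℤ) : ℝ) ^ 2) := by
    have far : (2 : ℝ) ≤ |(|(k : ℝ)| - n)| := mod_cast two_le_abs_abs_sub_of_notMem_Bset hn hk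
    simpa only [Int.cast_sub, Int.cast_add] using one_div_norm_sub_le hlower hupper ht far
  exact summable_subtype_and_tsum_subtype_le
    (f := fun k : ℤ => 1 / ‖lam - (((2 * (k : ℝ) + t) ^ 2 : ℝ) : ℂ)‖)
    (fun _ _ => by positivity) termwise_le (fun _ => by positivity) hasSum_majorant

end ResolventSum

theorem statement6_general {T : ℝ} (hT : T < 3) :
    ∃ C : ℝ, 0 < C ∧ ∀ n : ℤ, ∀ t : ℝ, |t| ≤ T → ∀ lam : ℂ,
      (2 * (n : ℝ) - 1) ^ 2 ≤ lam.re → lam.re ≤ (2 * (n : ℝ) + 1) ^ 2 →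
      Summable (fun k : {k : ℤ // k ∉ Bset n} =>
        1 / ‖lam - (((2 * ((k : ℤ) : ℝ) + t) ^ 2 : ℝ) : ℂ)‖) ∧
      (∑' k : {k : ℤ // k ∉ Bset n},
        1 / ‖lam - (((2 * ((k : ℤ) : ℝ) + t) ^ 2 : ℝ) : ℂ)‖) < C := by
  refine ⟨(2 / (3 - T)) ^ 2 * (2 * ∑' j : ℤ, 1 / (j : ℝ) ^ 2) + 1, by positivity, ?_⟩
  intro n t ht lam hlower hupper
  obtain ⟨summable, tsum_le⟩ :=
    summable_one_div_norm_sub_and_tsum_le (ht.trans_lt hT) hlower hupper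
  refine ⟨summable, (tsum_le.trans ?_).trans_lt (lt_add_one _)⟩
  have ht_sub : 0 < 3 - |t| := by linarith
  gcongr

/-- there is a constant `C > 0` such that for all `n ≥ 1`, `t ∈ (-1,1]`,
and `λ ∈ ℂ` with `(2n-1)² ≤ Re λ < (2n+1)²`, the sum `∑_{k ∉ B(n)} 1/|λ - (2k+t)²|`
is finite and less than `C`. -/
theorem statement6 :
    ∃ C : ℝ, 0 < C ∧ ∀ n : ℤ, 1 ≤ n → ∀ t ∈ Set.Ioc (-1:ℝ) 1, ∀ lam : ℂ,
      (2 * (n : ℝ) - 1) ^ 2 ≤ lam.re → lam.re < (2 * (n : ℝ) + 1) ^ 2 →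
      Summable (fun k : {k : ℤ // k ∉ Bset n} =>
        1 / ‖lam - (((2 * ((k : ℤ) : ℝ) + t) ^ 2 : ℝ) : ℂ)‖) ∧
      (∑' k : {k : ℤ // k ∉ Bset n},
        1 / ‖lam - (((2 * ((k : ℤ) : ℝ) + t) ^ 2 : ℝ) : ℂ)‖) < C := by
  obtain ⟨C, hC, bound⟩ := statement6_general (T := 1) (by norm_num)
  exact ⟨C, hC, fun n _ t ht lam hlower hupper =>
    bound n t (abs_le.mpr ⟨ht.1.le, ht.2⟩) lam hlower hupper.le⟩
end
end

section
/- There exists a constant M > 0 such that for every t ∈ (−1,1], every Bloch eigenvalue λ of L_t(Q), and every normalized Bloch function Ψ corresponding to λ, one has sup_{x ∈ [0,π]} |Ψ(x)| < M. -/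
open MeasureTheory Set Filter Topology Metric

open scoped Classical

noncomputable section

/-!
Let `f'' = F - μ f` with `‖F‖ ≤ K ‖f‖` and `∫ ‖f‖² = 1`. Testing the equation against `f`, the
boundary terms cancel by quasi-periodicity, so `μ` lies within distance `K` of the nonnegative
real number `p = ∫ ‖f'‖²`. Hence, with `a = p + 1`, the energy `E = ‖f'‖² + a ‖f‖²` satisfies
`|E'| ≤ (2K + 1) E`, and `∫ E = 2p + 1 ≤ 2a`. A function is bounded by its mean plus the
integral of the absolute value of its derivative, so `E ≤ C a` with `C` depending only on `K`,
and dividing by `a` bounds `‖f‖²` independently of `μ`.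
-/

section Interval

variable {a b : ℝ}

theorem le_average_add_integral_abs_deriv {g g' : ℝ → ℝ} {x : ℝ} (hab : a < b)
    (hg : ∀ y ∈ Icc a b, HasDerivAt g (g' y) y) (hg' : IntervalIntegrable g' volume a b)
    (hx : x ∈ Icc a b) :
    g x ≤ (⨍ y in a..b, g y) + ∫ y in a..b, |g' y| := by
  have g_cont : ContinuousOn g (uIcc a b) := by
    rw [uIcc_of_le hab.le]
    exact HasDerivAt.continuousOn hg
  obtain ⟨y, hy, hgy⟩ := exists_eq_interval_average hab.ne g_cont
  have hy : y ∈ Icc a b := by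
    rw [← uIcc_of_le hab.le]
    exact uIoo_subset_uIcc_self hy
  have hsub : uIcc y x ⊆ Icc a b := uIcc_subset_Icc hy hx
  have hsub' : uIoc y x ⊆ uIoc a b := by
    rw [uIoc_of_le hab.le]
    exact Ioc_subset_Ioc (le_min hy.1 hx.1) (max_le hy.2 hx.2)
  have ftc : g x - g y = ∫ z in y..x, g' z :=
    (intervalIntegral.integral_eq_sub_of_hasDerivAt (fun z hz => hg z (hsub hz))
      (hg'.mono_set (hsub.trans_eq (uIcc_of_le hab.le).symm))).symm
  have hle : ∫ z in y..x, g' z ≤ ∫ z in a..b, |g' z| :=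
    calc ∫ z in y..x, g' z
        ≤ |∫ z in y..x, ‖g' z‖| :=
          (Real.le_norm_self _).trans intervalIntegral.norm_integral_le_abs_integral_norm
      _ ≤ |∫ z in a..b, ‖g' z‖| :=
          intervalIntegral.abs_integral_mono_interval hsub' (ae_of_all _ fun _ => norm_nonneg _)
            hg'.norm
      _ = ∫ z in a..b, |g' z| :=
          abs_of_nonneg (intervalIntegral.integral_nonneg hab.le fun _ _ => abs_nonneg _)
  linarith

theorem le_mul_integral_of_abs_deriv_le_mul {g g' : ℝ → ℝ} {B x : ℝ} (hab : a < b)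
    (hg : ∀ y ∈ Icc a b, HasDerivAt g (g' y) y) (hg' : IntervalIntegrable g' volume a b)
    (hB : ∀ y ∈ Icc a b, |g' y| ≤ B * g y) (hx : x ∈ Icc a b) :
    g x ≤ ((b - a)⁻¹ + B) * ∫ y in a..b, g y := by
  have hg_int : IntervalIntegrable g volume a b :=
    (HasDerivAt.continuousOn hg).intervalIntegrable_of_Icc hab.le
  calc g x
      ≤ (⨍ y in a..b, g y) + ∫ y in a..b, |g' y| :=
        le_average_add_integral_abs_deriv hab hg hg' hx
    _ ≤ (⨍ y in a..b, g y) + ∫ y in a..b, B * g y := by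
        gcongr
        exact intervalIntegral.integral_mono_on hab.le hg'.abs (hg_int.const_mul B) hB
    _ = ((b - a)⁻¹ + B) * ∫ y in a..b, g y := by
        rw [interval_average_eq, intervalIntegral.integral_const_mul, smul_eq_mul, add_mul]

end Interval

section Energy

variable {E : Type*} [NormedAddCommGroup E] [InnerProductSpace ℝ E]

open scoped RealInnerProductSpace

theorem abs_two_mul_inner_add_le {u v w : E} {a B : ℝ} (ha : 1 ≤ a) (hB : 0 ≤ B)
    (hw : ‖w + a • u‖ ≤ B * ‖u‖) :
    |2 * ⟪v, w⟫ + a * (2 * ⟪u, v⟫)| ≤ B * (‖v‖ ^ 2 + a * ‖u‖ ^ 2) :=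
  calc |2 * ⟪v, w⟫ + a * (2 * ⟪u, v⟫)|
      = 2 * |⟪v, w + a • u⟫| := by
        rw [inner_add_right, real_inner_smul_right, real_inner_comm u v, ← abs_two,
          ← abs_mul, abs_two]
        ring_nf
    _ ≤ 2 * (‖v‖ * (B * ‖u‖)) := by
        gcongr
        exact (abs_real_inner_le_norm _ _).trans (by gcongr)
    _ = B * (2 * ‖v‖ * ‖u‖) := by ring
    _ ≤ B * (‖v‖ ^ 2 + ‖u‖ ^ 2) := by gcongr; exact two_mul_le_add_sq _ _
    _ ≤ B * (‖v‖ ^ 2 + a * ‖u‖ ^ 2) := by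
        gcongr
        exact le_mul_of_one_le_left (sq_nonneg _) ha

theorem norm_sq_add_mul_norm_sq_le_of_norm_deriv_deriv_add_smul_le {f f' f'' : ℝ → E}
    {α β a B x : ℝ} (hαβ : α < β) (ha : 1 ≤ a) (hB : 0 ≤ B)
    (hf : ∀ y ∈ Icc α β, HasDerivAt f (f' y) y) (hf' : ∀ y ∈ Icc α β, HasDerivAt f' (f'' y) y)
    (hf'' : ContinuousOn f'' (Icc α β)) (hle : ∀ y ∈ Icc α β, ‖f'' y + a • f y‖ ≤ B * ‖f y‖)
    (hx : x ∈ Icc α β) :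
    ‖f' x‖ ^ 2 + a * ‖f x‖ ^ 2 ≤
      ((β - α)⁻¹ + B) * ∫ y in α..β, (‖f' y‖ ^ 2 + a * ‖f y‖ ^ 2) := by
  have f_cont : ContinuousOn f (Icc α β) := HasDerivAt.continuousOn hf
  have f'_cont : ContinuousOn f' (Icc α β) := HasDerivAt.continuousOn hf'
  exact le_mul_integral_of_abs_deriv_le_mul hαβ
    (fun y hy => (hf' y hy).norm_sq.add ((hf y hy).norm_sq.const_mul a))
    (ContinuousOn.intervalIntegrable_of_Icc hαβ.le (by fun_prop))
    (fun y hy => abs_two_mul_inner_add_le ha hB (hle y hy)) hx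

end Energy

section Eigenfunction

variable {H : Type*} [NormedAddCommGroup H] [InnerProductSpace ℂ H] {f f' f'' : ℝ → H} {a b : ℝ}

open scoped ComplexInnerProductSpace

theorem integral_inner_deriv_deriv_eq_neg_integral_norm_sq (hab : a ≤ b)
    (hf : ∀ x ∈ Icc a b, HasDerivAt f (f' x) x) (hf' : ∀ x ∈ Icc a b, HasDerivAt f' (f'' x) x)
    (hf'' : ContinuousOn f'' (Icc a b)) (hbdry : ⟪f b, f' b⟫ = ⟪f a, f' a⟫) :
    ∫ x in a..b, ⟪f x, f'' x⟫ = -(∫ x in a..b, ‖f' x‖ ^ 2 : ℝ) := by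
  have f_cont : ContinuousOn f (Icc a b) := HasDerivAt.continuousOn hf
  have f'_cont : ContinuousOn f' (Icc a b) := HasDerivAt.continuousOn hf'
  have int₁ : IntervalIntegrable (fun x => ⟪f x, f'' x⟫) volume a b :=
    (f_cont.inner hf'').intervalIntegrable_of_Icc hab
  have int₂ : IntervalIntegrable (fun x => ⟪f' x, f' x⟫) volume a b :=
    (f'_cont.inner f'_cont).intervalIntegrable_of_Icc hab
  have ftc : ∫ x in a..b, (⟪f x, f'' x⟫ + ⟪f' x, f' x⟫) = ⟪f b, f' b⟫ - ⟪f a, f' a⟫ := by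
    refine intervalIntegral.integral_eq_sub_of_hasDerivAt (f := fun x => ⟪f x, f' x⟫)
      (fun x hx => ?_) (int₁.add int₂)
    rw [uIcc_of_le hab] at hx
    exact (hf x hx).inner ℂ (hf' x hx)
  rw [hbdry, sub_self, intervalIntegral.integral_add int₁ int₂] at ftc
  rw [eq_neg_of_add_eq_zero_left ftc, ← intervalIntegral.integral_ofReal]
  simp only [inner_self_eq_norm_sq_to_K, Complex.coe_algebraMap, Complex.ofReal_pow]

theorem norm_mul_integral_norm_sq_sub_integral_norm_deriv_sq_le {μ : ℂ} {K : ℝ} (hab : a ≤ b)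
    (hf : ∀ x ∈ Icc a b, HasDerivAt f (f' x) x) (hf' : ∀ x ∈ Icc a b, HasDerivAt f' (f'' x) x)
    (hf'' : ContinuousOn f'' (Icc a b)) (hbdry : ⟪f b, f' b⟫ = ⟪f a, f' a⟫)
    (hK : ∀ x ∈ Icc a b, ‖f'' x + μ • f x‖ ≤ K * ‖f x‖) :
    ‖μ * (∫ x in a..b, ‖f x‖ ^ 2 : ℝ) - (∫ x in a..b, ‖f' x‖ ^ 2 : ℝ)‖ ≤
      K * ∫ x in a..b, ‖f x‖ ^ 2 := by
  have f_cont : ContinuousOn f (Icc a b) := HasDerivAt.continuousOn hf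
  have rayleigh : μ * (∫ x in a..b, ‖f x‖ ^ 2 : ℝ) - (∫ x in a..b, ‖f' x‖ ^ 2 : ℝ) =
      ∫ x in a..b, ⟪f x, f'' x + μ • f x⟫ := by
    simp only [inner_add_right, inner_smul_right]
    rw [intervalIntegral.integral_add
        ((f_cont.inner hf'').intervalIntegrable_of_Icc hab)
        ((continuousOn_const.mul (f_cont.inner f_cont)).intervalIntegrable_of_Icc hab),
      integral_inner_deriv_deriv_eq_neg_integral_norm_sq hab hf hf' hf'' hbdry,
      intervalIntegral.integral_const_mul, ← intervalIntegral.integral_ofReal (f := (‖f ·‖ ^ 2))]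
    simp only [inner_self_eq_norm_sq_to_K, Complex.coe_algebraMap, Complex.ofReal_pow]
    ring
  rw [rayleigh]
  calc ‖∫ x in a..b, ⟪f x, f'' x + μ • f x⟫‖
      ≤ ∫ x in a..b, ‖⟪f x, f'' x + μ • f x⟫‖ :=
        intervalIntegral.norm_integral_le_integral_norm hab
    _ ≤ ∫ x in a..b, K * ‖f x‖ ^ 2 := by
        refine intervalIntegral.integral_mono_on hab
          (ContinuousOn.intervalIntegrable_of_Icc hab (by fun_prop))
          (ContinuousOn.intervalIntegrable_of_Icc hab (by fun_prop)) fun x hx => ?_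
        calc ‖⟪f x, f'' x + μ • f x⟫‖
            ≤ ‖f x‖ * (K * ‖f x‖) := by
              grw [norm_inner_le_norm, hK x hx]
          _ = K * ‖f x‖ ^ 2 := by ring
    _ = K * ∫ x in a..b, ‖f x‖ ^ 2 := intervalIntegral.integral_const_mul _ _

theorem norm_sq_le_of_norm_deriv_deriv_add_smul_le {μ : ℂ} {K x : ℝ} (hab : a < b)
    (hf : ∀ y ∈ Icc a b, HasDerivAt f (f' y) y) (hf' : ∀ y ∈ Icc a b, HasDerivAt f' (f'' y) y)
    (hf'' : ContinuousOn f'' (Icc a b)) (hbdry : ⟪f b, f' b⟫ = ⟪f a, f' a⟫)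
    (hK : ∀ y ∈ Icc a b, ‖f'' y + μ • f y‖ ≤ K * ‖f y‖)
    (hnorm : ∫ y in a..b, ‖f y‖ ^ 2 = 1) (hx : x ∈ Icc a b) :
    ‖f x‖ ^ 2 ≤ 2 * ((b - a)⁻¹ + (2 * K + 1)) := by
  let _ : InnerProductSpace ℝ H := InnerProductSpace.complexToReal
  have f_cont : ContinuousOn f (Icc a b) := HasDerivAt.continuousOn hf
  have f'_cont : ContinuousOn f' (Icc a b) := HasDerivAt.continuousOn hf'
  set p : ℝ := ∫ y in a..b, ‖f' y‖ ^ 2 with hp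
  have p_nonneg : 0 ≤ p := intervalIntegral.integral_nonneg hab.le fun _ _ => sq_nonneg _
  have hμ : ‖μ - p‖ ≤ K := by
    simpa only [hnorm, Complex.ofReal_one, mul_one] using
      norm_mul_integral_norm_sq_sub_integral_norm_deriv_sq_le hab.le hf hf' hf'' hbdry hK
  have K_nonneg : 0 ≤ K := (norm_nonneg _).trans hμ
  have shift : ∀ y ∈ Icc a b, ‖f'' y + (p + 1) • f y‖ ≤ (2 * K + 1) * ‖f y‖ := fun y hy =>
    calc ‖f'' y + (p + 1) • f y‖
        = ‖(f'' y + μ • f y) - (μ - p) • f y + f y‖ := by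
          rw [add_smul, sub_smul, one_smul, Complex.coe_smul]
          congr 1
          abel
      _ ≤ ‖f'' y + μ • f y‖ + ‖μ - p‖ * ‖f y‖ + ‖f y‖ := by
          grw [norm_add_le, norm_sub_le, norm_smul]
      _ ≤ K * ‖f y‖ + K * ‖f y‖ + ‖f y‖ := by grw [hK y hy, hμ]
      _ = (2 * K + 1) * ‖f y‖ := by ring
  have energy_integral : ∫ y in a..b, (‖f' y‖ ^ 2 + (p + 1) * ‖f y‖ ^ 2) = p + (p + 1) := by
    rw [intervalIntegral.integral_add
        (ContinuousOn.intervalIntegrable_of_Icc hab.le (by fun_prop))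
        (ContinuousOn.intervalIntegrable_of_Icc hab.le (by fun_prop)),
      intervalIntegral.integral_const_mul, hnorm, mul_one, ← hp]
  have energy_le := norm_sq_add_mul_norm_sq_le_of_norm_deriv_deriv_add_smul_le hab
    (by linarith : 1 ≤ p + 1) (by positivity) hf hf' hf'' shift hx
  have const_nonneg : 0 ≤ (b - a)⁻¹ + (2 * K + 1) :=
    add_nonneg (inv_nonneg.2 (sub_nonneg.2 hab.le)) (by positivity)
  refine le_of_mul_le_mul_left (a := p + 1) ?_ (by linarith)
  calc (p + 1) * ‖f x‖ ^ 2
      ≤ ‖f' x‖ ^ 2 + (p + 1) * ‖f x‖ ^ 2 := le_add_of_nonneg_left (sq_nonneg _)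
    _ ≤ ((b - a)⁻¹ + (2 * K + 1)) * (p + (p + 1)) := energy_integral ▸ energy_le
    _ ≤ ((b - a)⁻¹ + (2 * K + 1)) * (2 * (p + 1)) :=
        mul_le_mul_of_nonneg_left (by linarith) const_nonneg
    _ = (p + 1) * (2 * ((b - a)⁻¹ + (2 * K + 1))) := by ring

end Eigenfunction

section Bloch

theorem norm_blochPhase (t : ℝ) : ‖blochPhase t‖ = 1 := by
  rw [blochPhase, mul_assoc, ← Complex.ofReal_mul, mul_comm, Complex.norm_exp_ofReal_mul_I]

theorem inner_blochPhase_smul {H : Type*} [NormedAddCommGroup H] [InnerProductSpace ℂ H]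
    (t : ℝ) (v w : H) : inner ℂ (blochPhase t • v) (blochPhase t • w) = inner ℂ v w := by
  rw [inner_smul_left, inner_smul_right, ← mul_assoc, Complex.conj_mul', norm_blochPhase]
  simp only [Complex.ofReal_one, one_pow, one_mul]

variable {m : ℕ} {Q : ℝ → Matrix (Fin m) (Fin m) ℂ} {t : ℝ} {lam : ℂ} {Ψ : ℝ → Fin m → ℂ}

theorem IsBlochPair.hasDerivAt_toLp (h : IsBlochPair Q t lam Ψ) (x : ℝ) :
    HasDerivAt (fun y => WithLp.toLp 2 (Ψ y)) (WithLp.toLp 2 (deriv Ψ x)) x :=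
  (PiLp.hasFDerivAt_toLp (𝕜 := ℝ) 2 (Ψ x)).comp_hasDerivAt x
    (h.2.1.differentiable two_ne_zero x).hasDerivAt

theorem IsBlochPair.hasDerivAt_toLp_deriv (h : IsBlochPair Q t lam Ψ) (x : ℝ) :
    HasDerivAt (fun y => WithLp.toLp 2 (deriv Ψ y)) (WithLp.toLp 2 (deriv (deriv Ψ) x)) x :=
  (PiLp.hasFDerivAt_toLp (𝕜 := ℝ) 2 (deriv Ψ x)).comp_hasDerivAt x
    (h.2.1.differentiable_deriv_two x).hasDerivAt

theorem IsBlochPair.continuous_toLp_deriv_deriv (h : IsBlochPair Q t lam Ψ) :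
    Continuous fun x => WithLp.toLp 2 (deriv (deriv Ψ) x) :=
  (PiLp.continuous_toLp 2 _).comp
    ((contDiff_succ_iff_deriv (n := 1)).1 h.2.1).2.2.continuous_deriv_one

theorem IsBlochPair.deriv_add_pi (h : IsBlochPair Q t lam Ψ) (x : ℝ) :
    deriv Ψ (x + Real.pi) = blochPhase t • deriv Ψ x := by
  rw [← deriv_comp_add_const, funext h.2.2.2, deriv_fun_const_smul_field]

theorem IsBlochPair.deriv_deriv_add_smul (h : IsBlochPair Q t lam Ψ) (x : ℝ) :
    deriv (deriv Ψ) x + lam • Ψ x = (Q x).mulVec (Ψ x) := by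
  rw [← h.2.2.1 x, add_neg_cancel_left]

theorem IsBlochPair.inner_toLp_deriv_pi (h : IsBlochPair Q t lam Ψ) :
    inner ℂ (WithLp.toLp 2 (Ψ Real.pi)) (WithLp.toLp 2 (deriv Ψ Real.pi)) =
      inner ℂ (WithLp.toLp 2 (Ψ 0)) (WithLp.toLp 2 (deriv Ψ 0)) := by
  rw [← zero_add Real.pi, h.2.2.2, h.deriv_add_pi, WithLp.toLp_smul, WithLp.toLp_smul,
    inner_blochPhase_smul]

open scoped Matrix.Norms.L2Operator

theorem IsBlochPair.norm_toLp_deriv_deriv_add_smul_le (h : IsBlochPair Q t lam Ψ) (x : ℝ) :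
    ‖WithLp.toLp 2 (deriv (deriv Ψ) x) + lam • WithLp.toLp 2 (Ψ x)‖ ≤
      ‖Q x‖ * ‖WithLp.toLp 2 (Ψ x)‖ := by
  rw [← WithLp.toLp_smul, ← WithLp.toLp_add, h.deriv_deriv_add_smul]
  exact (Q x).l2_opNorm_mulVec (WithLp.toLp 2 (Ψ x))

theorem statement7_general {K : ℝ} (hQ : ∀ x ∈ Icc 0 Real.pi, ‖Q x‖ ≤ K)
    (hΨ : IsBlochPair Q t lam Ψ) (hnorm : IsNormalized Ψ) {x : ℝ} (hx : x ∈ Icc 0 Real.pi) :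
    Real.sqrt (∑ i, ‖Ψ x i‖ ^ 2) ≤ Real.sqrt (2 * (Real.pi⁻¹ + (2 * K + 1))) := by
  have norm_sq_toLp (y : ℝ) : ‖WithLp.toLp 2 (Ψ y)‖ ^ 2 = ∑ i, ‖Ψ y i‖ ^ 2 :=
    EuclideanSpace.norm_sq_eq _
  have integral_norm_sq_toLp : ∫ y in (0 : ℝ)..Real.pi, ‖WithLp.toLp 2 (Ψ y)‖ ^ 2 = 1 := by
    simpa only [norm_sq_toLp, IsNormalized] using hnorm
  have bound := norm_sq_le_of_norm_deriv_deriv_add_smul_le Real.pi_pos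
    (fun y _ => hΨ.hasDerivAt_toLp y) (fun y _ => hΨ.hasDerivAt_toLp_deriv y)
    hΨ.continuous_toLp_deriv_deriv.continuousOn hΨ.inner_toLp_deriv_pi
    (fun y hy => (hΨ.norm_toLp_deriv_deriv_add_smul_le y).trans (by grw [hQ y hy]))
    integral_norm_sq_toLp hx
  rw [norm_sq_toLp, sub_zero] at bound
  exact Real.sqrt_le_sqrt bound

end Bloch

/-- there is a constant `M > 0` bounding, uniformly over `t ∈ (-1,1]`,
all normalized Bloch functions on `[0,π]` in the Euclidean norm. -/
theorem statement7 {m : ℕ} (hm : 1 ≤ m) (Q : ℝ → Matrix (Fin m) (Fin m) ℂ)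
    (hQcont : Continuous Q)
    (hQper : ∀ x : ℝ, Q (x + Real.pi) = Q x) :
    ∃ M : ℝ, 0 < M ∧ ∀ t ∈ Set.Ioc (-1:ℝ) 1, ∀ (lam : ℂ) (Ψ : ℝ → Fin m → ℂ),
      IsBlochPair Q t lam Ψ → IsNormalized Ψ →
      ∀ x ∈ Set.Icc (0:ℝ) Real.pi, Real.sqrt (∑ i, ‖Ψ x i‖ ^ 2) < M := by
  open scoped Matrix.Norms.L2Operator in
  obtain ⟨K, hK⟩ := (isCompact_Icc (a := 0) (b := Real.pi)).exists_bound_of_continuousOn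
    hQcont.continuousOn
  exact ⟨Real.sqrt (2 * (Real.pi⁻¹ + (2 * K + 1))) + 1, by positivity, fun _ _ _ _ hΨ hnorm _ hx =>
    (statement7_general hK hΨ hnorm hx).trans_lt (lt_add_one _)⟩
end
end

section
/- Suppose that the matrix A = ∫₀^π Q(x) dx has no real eigenvalues. Then there exist real numbers a ≤ b such that every real Bloch eigenvalue of L(Q) lies in [a,b]; that is, σ(L(Q)) ∩ ℝ ⊆ [a,b]. -/
open MeasureTheory Set Filter Topology Metric

open scoped Classical

noncomputable section

/-- The mean matrix `A = ∫₀^π Q(x) dx`. -/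
def meanMatrix {m : ℕ} (Q : ℝ → Matrix (Fin m) (Fin m) ℂ) : Matrix (Fin m) (Fin m) ℂ :=
  Matrix.of fun i j => ∫ x in (0:ℝ)..Real.pi, Q x i j

/-! For `lam = r² > 0` write `u r = e^{-irx}(ψ' + irψ)`. Along a solution `u r` and `u (-r)` vary by
only `O(1/r)` relative to their size, so integrating `2ir (u r)' = q (u r) - e^{-2irx} q (u (-r))`
over a period and applying the Riemann–Lebesgue lemma to the second term shows that the larger of
the two vectors at `0`, say `w`, satisfies `(∫ q) w = ζ w + o(1) ‖w‖` with
`ζ = 2ir (e^{-irT} ω - 1)`. As `e^{-irT} ω` lies on the unit circle within `O(1/r)` of `1`, `ζ` is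
within `O(1/r)` of the real axis. When `∫ q` has no real spectrum this forces `w = 0` for large `r`.
For very negative `lam` a maximum principle for `‖ψ‖` excludes nonzero solutions. -/

theorem exists_norm_resolvent_ofReal_le {R : Type*} [NormedRing R] [NormedAlgebra ℂ R]
    [CompleteSpace R] {a : R} (ha : ∀ s : ℝ, (s : ℂ) ∉ spectrum ℂ a) :
    ∃ C, ∀ s : ℝ, ‖resolvent a (s : ℂ)‖ ≤ C := by
  have hcont : Continuous fun s : ℝ => resolvent a (s : ℂ) :=
    continuous_iff_continuousAt.2 fun s =>
      (spectrum.hasDerivAt_resolvent_const_left (spectrum.notMem_iff.1 (ha s))).continuousAt.comp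
        Complex.continuous_ofReal.continuousAt
  have hlim : Tendsto (fun s : ℝ => resolvent a (s : ℂ)) (cocompact ℝ) (𝓝 0) := by
    rw [← Metric.cobounded_eq_cocompact]
    exact (spectrum.resolvent_tendsto_cobounded a).comp
      (RCLike.tendsto_ofReal_cobounded_cobounded ℂ)
  let f : ZeroAtInftyContinuousMap ℝ R := ⟨⟨_, hcont⟩, hlim⟩
  obtain ⟨C, hC⟩ := f.isBounded_range.exists_norm_le
  exact ⟨C, fun s => hC _ ⟨s, rfl⟩⟩

theorem exists_pos_mul_norm_le_norm_apply_sub_smul {E : Type*} [NormedAddCommGroup E]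
    [NormedSpace ℂ E] [CompleteSpace E] {A : E →L[ℂ] E} (hA : ∀ s : ℝ, (s : ℂ) ∉ spectrum ℂ A) :
    ∃ δ > 0, ∀ (s : ℝ) (w : E), δ * ‖w‖ ≤ ‖A w - (s : ℂ) • w‖ := by
  obtain ⟨C, hC⟩ := exists_norm_resolvent_ofReal_le hA
  have hC₀ : 0 ≤ C := (norm_nonneg _).trans (hC 0)
  refine ⟨(C + 1)⁻¹, by positivity, fun s w => ?_⟩
  have hinv : resolvent A (s : ℂ) ((s : ℂ) • w - A w) = w := by
    have h := Ring.inverse_mul_cancel _ (spectrum.notMem_iff.1 (hA s))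
    simpa [resolvent] using DFunLike.congr_fun h w
  rw [inv_mul_le_iff₀ (by positivity)]
  calc ‖w‖ = ‖resolvent A (s : ℂ) ((s : ℂ) • w - A w)‖ := by rw [hinv]
    _ ≤ C * ‖A w - (s : ℂ) • w‖ := by
      rw [norm_sub_rev]; exact ContinuousLinearMap.le_of_opNorm_le _ (hC s) _
    _ ≤ (C + 1) * ‖A w - (s : ℂ) • w‖ := by gcongr; linarith

section RiemannLebesgue

variable {V : Type*} [NormedAddCommGroup V] [NormedSpace ℂ V]

/-- The Fourier transform at angular frequency `r` of `f` restricted to `[0, T]`. -/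
def oscillatoryIntegral (f : ℝ → V) (T r : ℝ) : V :=
  ∫ x in (0 : ℝ)..T, Complex.exp (-(Complex.I * r * x)) • f x

theorem tendsto_oscillatoryIntegral_cocompact (f : ℝ → V) {T : ℝ} (hT : 0 ≤ T) :
    Tendsto (oscillatoryIntegral f T) (cocompact ℝ) (𝓝 0) := by
  have hscale : Tendsto (fun r : ℝ => r * (2 * Real.pi)⁻¹) (cocompact ℝ) (cocompact ℝ) :=
    (Homeomorph.mulRight₀ _ (inv_ne_zero Real.two_pi_pos.ne')).isClosedEmbedding.tendsto_cocompact
  refine ((Real.tendsto_integral_exp_smul_cocompact ((Ioc 0 T).indicator f)).comp hscale).congr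
    fun r => ?_
  rw [oscillatoryIntegral, intervalIntegral.integral_of_le hT,
    ← integral_indicator measurableSet_Ioc]
  refine integral_congr_ae (.of_forall fun x => ?_)
  have hphase : (Real.fourierChar (-(x * (r * (2 * Real.pi)⁻¹))) : ℂ) =
      Complex.exp (-(Complex.I * r * x)) := by
    rw [Real.fourierChar_apply]
    congr 1
    push_cast
    field_simp
  simp only [Circle.smul_def, hphase, indicator_smul_apply]

end RiemannLebesgue

theorem deriv_deriv_nonpos_of_isLocalMax {f : ℝ → ℝ} {x : ℝ} (hmax : IsLocalMax f x)
    (hf : ContinuousAt f x) : deriv (deriv f) x ≤ 0 := by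
  by_contra! hpos
  have hmin : IsLocalMin f x := isLocalMin_of_deriv_deriv_pos hpos hmax.deriv_eq_zero hf
  have hconst : f =ᶠ[𝓝 x] fun _ => f x := by
    filter_upwards [hmax, hmin] with y using le_antisymm
  simp [hconst.deriv.deriv_eq] at hpos

/-- Apply the second derivative test to `g ∘ f`, where `g` is a norming functional of `f x`. -/
theorem mul_norm_le_of_isLocalMax_norm {E : Type*} [NormedAddCommGroup E] [NormedSpace ℝ E]
    {f : ℝ → E} {x c : ℝ} {y : E} (hmax : IsLocalMax (fun t => ‖f t‖) x)
    (hf : Differentiable ℝ f) (hf' : HasDerivAt (deriv f) (c • f x + y) x) :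
    c * ‖f x‖ ≤ ‖y‖ := by
  obtain ⟨g, hg, hgx⟩ := exists_dual_vector'' ℝ (f x)
  have hg_le (v : E) : |g v| ≤ ‖v‖ := by simpa using g.le_of_opNorm_le hg v
  have hgmax : IsLocalMax (fun t => g (f t)) x := by
    filter_upwards [hmax] with t ht
    exact (le_abs_self _).trans ((hg_le _).trans (ht.trans hgx.ge))
  have hderiv : deriv (fun t => g (f t)) = fun t => g (deriv f t) :=
    funext fun t => (g.hasFDerivAt.comp_hasDerivAt t (hf t).hasDerivAt).deriv
  have hsecond : deriv (deriv fun t => g (f t)) x = c * ‖f x‖ + g y := by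
    rw [hderiv]
    exact (g.hasFDerivAt.comp_hasDerivAt x hf').deriv.trans (by simp [hgx])
  have hnonpos := deriv_deriv_nonpos_of_isLocalMax hgmax
    (g.continuous.comp hf.continuous).continuousAt
  linarith [neg_le_of_abs_le (hg_le y)]

theorem exists_mem_Icc_forall_le_of_periodic {f : ℝ → ℝ} {T : ℝ} (hT : 0 < T)
    (hf : Function.Periodic f T) (hcont : Continuous f) : ∃ x₀ ∈ Icc 0 T, ∀ x, f x ≤ f x₀ := by
  obtain ⟨x₀, hx₀, hmax⟩ := isCompact_Icc.exists_isMaxOn (nonempty_Icc.2 hT.le) hcont.continuousOn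
  refine ⟨x₀, hx₀, fun x => ?_⟩
  obtain ⟨y, hy, hxy⟩ := hf.exists_mem_Ico₀ hT x
  exact hxy.trans_le (hmax (Ico_subset_Icc_self hy))

theorem norm_exp_neg_I_mul_ofReal_mul_ofReal (r x : ℝ) :
    ‖Complex.exp (-(Complex.I * r * x))‖ = 1 := by
  simp [Complex.norm_exp]

theorem abs_im_two_mul_I_mul_sub_one {ω : ℂ} (r : ℝ) (hω : ‖ω‖ = 1) :
    |(2 * Complex.I * r * (ω - 1)).im| = |r| * ‖ω - 1‖ ^ 2 := by
  have him : (2 * Complex.I * r * (ω - 1)).im = -(r * (2 * (1 - ω.re))) := by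
    simp only [Complex.mul_im, Complex.mul_re, Complex.re_ofNat, Complex.im_ofNat, Complex.I_re,
      Complex.I_im, Complex.ofReal_re, Complex.ofReal_im, Complex.sub_re, Complex.sub_im,
      Complex.one_re, Complex.one_im]
    ring
  rw [him, ← Complex.norm_sub_one_sq_eq_of_norm_eq_one hω, abs_neg, abs_mul,
    abs_of_nonneg (sq_nonneg ‖ω - 1‖)]

theorem mul_norm_le_norm_sub_smul_add {E : Type*} [NormedAddCommGroup E] [NormedSpace ℂ E]
    {δ : ℝ} {z : ℂ} {v w : E} (h : δ * ‖w‖ ≤ ‖v - (z.re : ℂ) • w‖) :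
    δ * ‖w‖ ≤ ‖v - z • w‖ + |z.im| * ‖w‖ := by
  have hsplit : v - (z.re : ℂ) • w = (v - z • w) + (z.im * Complex.I) • w := by
    nth_rw 2 [← Complex.re_add_im z]
    module
  calc δ * ‖w‖ ≤ ‖(v - z • w) + (z.im * Complex.I) • w‖ := hsplit ▸ h
    _ ≤ ‖v - z • w‖ + ‖(z.im * Complex.I) • w‖ := norm_add_le _ _
    _ = ‖v - z • w‖ + |z.im| * ‖w‖ := by simp [norm_smul]

theorem norm_integral_apply_sub_oscillatoryIntegral_apply_sub_le {E : Type*}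
    [NormedAddCommGroup E] [NormedSpace ℂ E] {q : ℝ → E →L[ℂ] E} {u v : ℝ → E}
    {u₀ v₀ : E} {T K η s : ℝ} (hq : Continuous q) (hu : Continuous u) (hv : Continuous v)
    (hT : 0 ≤ T) (hK : ∀ x ∈ Icc 0 T, ‖q x‖ ≤ K) (hu_le : ∀ x ∈ Icc 0 T, ‖u x - u₀‖ ≤ η)
    (hv_le : ∀ x ∈ Icc 0 T, ‖v x - v₀‖ ≤ η) :
    ‖(∫ x in (0 : ℝ)..T, q x) u₀ - oscillatoryIntegral q T s v₀ -
        ∫ x in (0 : ℝ)..T, (q x (u x) - Complex.exp (-(Complex.I * s * x)) • q x (v x))‖ ≤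
      2 * K * η * T := by
  let e (x : ℝ) : ℂ := Complex.exp (-(Complex.I * s * x))
  have he : Continuous e := by fun_prop
  have heq : Continuous fun x => e x • q x := he.smul hq
  let remainder (x : ℝ) : E := q x (u₀ - u x) - e x • q x (v₀ - v x)
  have hremainder_le : ∀ x ∈ uIoc 0 T, ‖remainder x‖ ≤ 2 * K * η := by
    intro x hx
    have hx' : x ∈ Icc 0 T := Ioc_subset_Icc_self (uIoc_of_le hT ▸ hx)
    calc ‖remainder x‖ ≤ ‖q x (u₀ - u x)‖ + ‖q x (v₀ - v x)‖ := by
          refine (norm_sub_le _ _).trans_eq ?_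
          rw [norm_smul, norm_exp_neg_I_mul_ofReal_mul_ofReal, one_mul]
      _ ≤ K * η + K * η :=
          add_le_add ((q x).le_of_opNorm_le_of_le (hK x hx') (norm_sub_rev u₀ _ ▸ hu_le x hx'))
            ((q x).le_of_opNorm_le_of_le (hK x hx') (norm_sub_rev v₀ _ ▸ hv_le x hx'))
      _ = 2 * K * η := by ring
  have hintegral : (∫ x in (0 : ℝ)..T, q x) u₀ - oscillatoryIntegral q T s v₀ -
      ∫ x in (0 : ℝ)..T, (q x (u x) - e x • q x (v x)) = ∫ x in (0 : ℝ)..T, remainder x := by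
    change (∫ x in (0 : ℝ)..T, q x) u₀ - (∫ x in (0 : ℝ)..T, e x • q x) v₀ - _ = _
    rw [ContinuousLinearMap.intervalIntegral_apply (hq.intervalIntegrable _ _),
      ContinuousLinearMap.intervalIntegral_apply (heq.intervalIntegrable _ _),
      ← intervalIntegral.integral_sub, ← intervalIntegral.integral_sub]
    · refine intervalIntegral.integral_congr fun x _ => ?_
      simp only [remainder, map_sub, smul_apply, smul_sub]
      abel
    all_goals exact Continuous.intervalIntegrable (by fun_prop) _ _
  have hmain := intervalIntegral.norm_integral_le_of_norm_le_const hremainder_le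
  rwa [sub_zero, abs_of_nonneg hT, ← hintegral] at hmain

/-- `ψ` solves `-ψ'' + qψ = lam ψ` and is quasi-periodic with period `T` and Floquet multiplier `ω`.
The values of `q` are bounded operators on an arbitrary space `E`. -/
structure IsFloquetSolution {E : Type*} [NormedAddCommGroup E] [NormedSpace ℂ E]
    (q : ℝ → E →L[ℂ] E) (T : ℝ) (ω lam : ℂ) (ψ : ℝ → E) : Prop where
  differentiable : Differentiable ℝ ψ
  hasDerivAt_deriv : ∀ x, HasDerivAt (deriv ψ) (q x (ψ x) - lam • ψ x) x
  apply_add : ∀ x, ψ (x + T) = ω • ψ x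

section Amplitude

variable {E : Type*} [NormedAddCommGroup E] [NormedSpace ℂ E]

/-- The coefficient of `e^{irx} / (2ir)` when `ψ` is written as a combination of `e^{irx}` and
`e^{-irx}` by variation of constants. -/
def amplitude (r : ℝ) (ψ : ℝ → E) (x : ℝ) : E :=
  Complex.exp (-(Complex.I * r * x)) • (deriv ψ x + (Complex.I * r) • ψ x)

theorem amplitude_sub_exp_smul_amplitude_neg (ψ : ℝ → E) (r x : ℝ) :
    amplitude r ψ x - Complex.exp (-(Complex.I * (2 * r : ℝ) * x)) • amplitude (-r) ψ x =
      (2 * Complex.I * r) • Complex.exp (-(Complex.I * r * x)) • ψ x := by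
  have hexp : Complex.exp (-(Complex.I * (2 * r : ℝ) * x)) *
      Complex.exp (-(Complex.I * (-r : ℝ) * x)) = Complex.exp (-(Complex.I * r * x)) := by
    rw [← Complex.exp_add]; push_cast; ring_nf
  rw [amplitude, amplitude, smul_smul, hexp]
  push_cast
  module

theorem two_mul_abs_mul_norm_le_norm_amplitude_add (ψ : ℝ → E) (r x : ℝ) :
    2 * |r| * ‖ψ x‖ ≤ ‖amplitude r ψ x‖ + ‖amplitude (-r) ψ x‖ := by
  have h := norm_sub_le (amplitude r ψ x)
    (Complex.exp (-(Complex.I * (2 * r : ℝ) * x)) • amplitude (-r) ψ x)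
  rw [amplitude_sub_exp_smul_amplitude_neg] at h
  simpa only [norm_smul, norm_exp_neg_I_mul_ofReal_mul_ofReal, norm_mul, Complex.norm_ofNat,
    Complex.norm_I, Complex.norm_real, Real.norm_eq_abs, mul_one, one_mul] using h

end Amplitude

namespace IsFloquetSolution

variable {E : Type*} [NormedAddCommGroup E] [NormedSpace ℂ E] {q : ℝ → E →L[ℂ] E} {T : ℝ} {ω : ℂ}
  {ψ : ℝ → E}

section General

variable {lam : ℂ}

theorem deriv_apply_add (hψ : IsFloquetSolution q T ω lam ψ) (x : ℝ) :
    deriv ψ (x + T) = ω • deriv ψ x := by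
  rw [← deriv_comp_add_const, funext hψ.apply_add]
  exact deriv_fun_const_smul_field ω ψ

theorem norm_periodic (hψ : IsFloquetSolution q T ω lam ψ) (hω : ‖ω‖ = 1) :
    Function.Periodic (fun x => ‖ψ x‖) T := fun x => by
  simp only [hψ.apply_add, norm_smul, hω, one_mul]

theorem exists_forall_norm_le (hψ : IsFloquetSolution q T ω lam ψ) (hT : 0 < T) (hω : ‖ω‖ = 1) :
    ∃ x₀ ∈ Icc 0 T, ∀ x, ‖ψ x‖ ≤ ‖ψ x₀‖ :=
  exists_mem_Icc_forall_le_of_periodic hT (hψ.norm_periodic hω) hψ.differentiable.continuous.norm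

end General

theorem eq_zero_of_lt_neg {K l : ℝ} (hψ : IsFloquetSolution q T ω l ψ) (hT : 0 < T) (hω : ‖ω‖ = 1)
    (hK : ∀ x ∈ Icc 0 T, ‖q x‖ ≤ K) (hl : l < -K) : ψ = 0 := by
  obtain ⟨x₀, hx₀, hmax⟩ := hψ.exists_forall_norm_le hT hω
  have hderiv : HasDerivAt (deriv ψ) ((-l) • ψ x₀ + q x₀ (ψ x₀)) x₀ := by
    convert hψ.hasDerivAt_deriv x₀ using 1
    rw [Complex.coe_smul]
    module
  have hle : -l * ‖ψ x₀‖ ≤ K * ‖ψ x₀‖ :=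
    (mul_norm_le_of_isLocalMax_norm (.of_forall hmax) hψ.differentiable hderiv).trans
      ((q x₀).le_of_opNorm_le (hK x₀ hx₀) _)
  have hzero : ‖ψ x₀‖ = 0 := by nlinarith [norm_nonneg (ψ x₀)]
  funext x
  exact norm_le_zero_iff.1 (hzero ▸ hmax x)

section Amplitude

variable {r : ℝ}

theorem neg_sq (hψ : IsFloquetSolution q T ω (r ^ 2) ψ) :
    IsFloquetSolution q T ω ((-r : ℝ) ^ 2) ψ := by
  simpa using hψ

theorem hasDerivAt_amplitude (hψ : IsFloquetSolution q T ω (r ^ 2) ψ) (x : ℝ) :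
    HasDerivAt (amplitude r ψ) (Complex.exp (-(Complex.I * r * x)) • q x (ψ x)) x := by
  have hexp : HasDerivAt (fun y : ℝ => Complex.exp (-(Complex.I * r * y)))
      (Complex.exp (-(Complex.I * r * x)) * -(Complex.I * r)) x := by
    simpa using ((Complex.ofRealCLM.hasDerivAt (x := x)).const_mul (Complex.I * r)).neg.cexp
  have hsum := (hψ.hasDerivAt_deriv x).add
    ((hψ.differentiable x).hasDerivAt.const_smul (Complex.I * (r : ℂ)))
  have hI : (Complex.I * (r : ℂ)) * (Complex.I * r) = -(r : ℂ) ^ 2 := by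
    linear_combination (r : ℂ) ^ 2 * Complex.I_mul_I
  refine (hexp.smul hsum).congr_deriv ?_
  rw [Pi.add_apply, Pi.smul_apply, mul_smul _ (-(Complex.I * (r : ℂ))), neg_smul,
    smul_add (Complex.I * (r : ℂ)), smul_smul (Complex.I * (r : ℂ)), hI]
  module

theorem continuous_amplitude (hψ : IsFloquetSolution q T ω (r ^ 2) ψ) :
    Continuous (amplitude r ψ) :=
  continuous_iff_continuousAt.2 fun x => (hψ.hasDerivAt_amplitude x).continuousAt

theorem amplitude_period (hψ : IsFloquetSolution q T ω (r ^ 2) ψ) :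
    amplitude r ψ T = (Complex.exp (-(Complex.I * r * T)) * ω) • amplitude r ψ 0 := by
  have h := hψ.apply_add 0
  have h' := hψ.deriv_apply_add 0
  rw [zero_add] at h h'
  simp only [amplitude, h, h', Complex.ofReal_zero, mul_zero, neg_zero, Complex.exp_zero]
  module

theorem norm_amplitude_sub_le {K M x : ℝ} (hψ : IsFloquetSolution q T ω (r ^ 2) ψ)
    (hK : ∀ x ∈ Icc 0 T, ‖q x‖ ≤ K) (hM : ∀ x ∈ Icc 0 T, ‖ψ x‖ ≤ M) (hx : x ∈ Icc 0 T) :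
    ‖amplitude r ψ x - amplitude r ψ 0‖ ≤ K * M * T := by
  have hbound : ∀ t ∈ Icc 0 T, ‖Complex.exp (-(Complex.I * r * t)) • q t (ψ t)‖ ≤ K * M := by
    intro t ht
    rw [norm_smul, norm_exp_neg_I_mul_ofReal_mul_ofReal, one_mul]
    exact (q t).le_of_opNorm_le_of_le (hK t ht) (hM t ht)
  have hKM : 0 ≤ K * M := (norm_nonneg _).trans (hbound x hx)
  calc ‖amplitude r ψ x - amplitude r ψ 0‖ ≤ K * M * (x - 0) :=
        norm_image_sub_le_of_norm_deriv_le_segment'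
          (fun t _ => (hψ.hasDerivAt_amplitude t).hasDerivWithinAt)
          (fun t ht => hbound t (Ico_subset_Icc_self ht)) x hx
    _ ≤ K * M * T := by gcongr; linarith [hx.2]

theorem integral_apply_amplitude [CompleteSpace E] (hψ : IsFloquetSolution q T ω (r ^ 2) ψ)
    (hq : Continuous q) :
    ∫ x in (0 : ℝ)..T, (q x (amplitude r ψ x) -
        Complex.exp (-(Complex.I * (2 * r : ℝ) * x)) • q x (amplitude (-r) ψ x)) =
      (2 * Complex.I * r * (Complex.exp (-(Complex.I * r * T)) * ω - 1)) • amplitude r ψ 0 := by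
  have hψ_cont : Continuous ψ := hψ.differentiable.continuous
  have hcont : Continuous fun x : ℝ => Complex.exp (-(Complex.I * r * x)) • q x (ψ x) := by
    fun_prop
  have hintegrand (x : ℝ) : q x (amplitude r ψ x) -
      Complex.exp (-(Complex.I * (2 * r : ℝ) * x)) • q x (amplitude (-r) ψ x) =
        (2 * Complex.I * r) • Complex.exp (-(Complex.I * r * x)) • q x (ψ x) := by
    simpa only [map_sub, map_smul] using
      congrArg (q x) (amplitude_sub_exp_smul_amplitude_neg ψ r x)
  simp_rw [hintegrand]
  rw [intervalIntegral.integral_smul, intervalIntegral.integral_eq_sub_of_hasDerivAt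
    (fun x _ => hψ.hasDerivAt_amplitude x) (hcont.intervalIntegrable 0 T), hψ.amplitude_period]
  module

end Amplitude

section Dominant

variable {r K : ℝ}

theorem norm_apply_le (hψ : IsFloquetSolution q T ω (r ^ 2) ψ) (hT : 0 < T) (hω : ‖ω‖ = 1)
    (hK : ∀ x ∈ Icc 0 T, ‖q x‖ ≤ K) (hr : 2 * K * T < |r|)
    (hle : ‖amplitude (-r) ψ 0‖ ≤ ‖amplitude r ψ 0‖) (x : ℝ) :
    ‖ψ x‖ ≤ 2 * ‖amplitude r ψ 0‖ / |r| := by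
  obtain ⟨x₀, hx₀, hmax⟩ := hψ.exists_forall_norm_le hT hω
  have hK₀ : 0 ≤ K := (norm_nonneg _).trans (hK x₀ hx₀)
  have hr₀ : 0 < |r| := lt_of_le_of_lt (by positivity) hr
  refine (hmax x).trans ((le_div_iff₀' hr₀).2 ?_)
  have hu := hψ.norm_amplitude_sub_le hK (fun x _ => hmax x) hx₀
  have hv := hψ.neg_sq.norm_amplitude_sub_le hK (fun x _ => hmax x) hx₀
  have hsum : 2 * |r| * ‖ψ x₀‖ ≤ 2 * ‖amplitude r ψ 0‖ + 2 * K * T * ‖ψ x₀‖ := by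
    linarith [two_mul_abs_mul_norm_le_norm_amplitude_add ψ r x₀,
      norm_le_norm_add_norm_sub' (amplitude r ψ x₀) (amplitude r ψ 0),
      norm_le_norm_add_norm_sub' (amplitude (-r) ψ x₀) (amplitude (-r) ψ 0)]
  linarith [mul_le_mul_of_nonneg_right hr.le (norm_nonneg (ψ x₀))]

theorem norm_amplitude_sub_le_mul (hψ : IsFloquetSolution q T ω (r ^ 2) ψ) (hT : 0 < T)
    (hω : ‖ω‖ = 1) (hK : ∀ x ∈ Icc 0 T, ‖q x‖ ≤ K) (hr : 2 * K * T < |r|)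
    (hle : ‖amplitude (-r) ψ 0‖ ≤ ‖amplitude r ψ 0‖) {x : ℝ} (hx : x ∈ Icc 0 T) :
    ‖amplitude r ψ x - amplitude r ψ 0‖ ≤ 2 * K * T / |r| * ‖amplitude r ψ 0‖ ∧
      ‖amplitude (-r) ψ x - amplitude (-r) ψ 0‖ ≤ 2 * K * T / |r| * ‖amplitude r ψ 0‖ := by
  have hM (x : ℝ) (_ : x ∈ Icc 0 T) := hψ.norm_apply_le hT hω hK hr hle x
  rw [show 2 * K * T / |r| * ‖amplitude r ψ 0‖ = K * (2 * ‖amplitude r ψ 0‖ / |r|) * T by ring]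
  exact ⟨hψ.norm_amplitude_sub_le hK hM hx, hψ.neg_sq.norm_amplitude_sub_le hK hM hx⟩

theorem norm_multiplier_sub_one_le (hψ : IsFloquetSolution q T ω (r ^ 2) ψ) (hT : 0 < T)
    (hω : ‖ω‖ = 1) (hK : ∀ x ∈ Icc 0 T, ‖q x‖ ≤ K) (hr : 2 * K * T < |r|)
    (hle : ‖amplitude (-r) ψ 0‖ ≤ ‖amplitude r ψ 0‖) (hne : amplitude r ψ 0 ≠ 0) :
    ‖Complex.exp (-(Complex.I * r * T)) * ω - 1‖ ≤ 2 * K * T / |r| := by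
  refine le_of_mul_le_mul_right ?_ (norm_pos_iff.2 hne)
  rw [← norm_smul, sub_smul, one_smul, ← hψ.amplitude_period]
  exact (hψ.norm_amplitude_sub_le_mul hT hω hK hr hle (right_mem_Icc.2 hT.le)).1

variable [CompleteSpace E]

theorem norm_integral_apply_sub_smul_le (hψ : IsFloquetSolution q T ω (r ^ 2) ψ)
    (hq : Continuous q) (hT : 0 < T) (hω : ‖ω‖ = 1) (hK : ∀ x ∈ Icc 0 T, ‖q x‖ ≤ K)
    (hr : 2 * K * T < |r|) (hle : ‖amplitude (-r) ψ 0‖ ≤ ‖amplitude r ψ 0‖) :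
    ‖(∫ x in (0 : ℝ)..T, q x) (amplitude r ψ 0) -
        (2 * Complex.I * r * (Complex.exp (-(Complex.I * r * T)) * ω - 1)) • amplitude r ψ 0‖ ≤
      (‖oscillatoryIntegral q T (2 * r)‖ + 4 * K ^ 2 * T ^ 2 / |r|) * ‖amplitude r ψ 0‖ := by
  have hfreeze := norm_integral_apply_sub_oscillatoryIntegral_apply_sub_le (s := 2 * r) hq
    hψ.continuous_amplitude hψ.neg_sq.continuous_amplitude hT.le hK
    (fun x hx => (hψ.norm_amplitude_sub_le_mul hT hω hK hr hle hx).1)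
    (fun x hx => (hψ.norm_amplitude_sub_le_mul hT hω hK hr hle hx).2)
  rw [hψ.integral_apply_amplitude hq] at hfreeze
  have hosc := (oscillatoryIntegral q T (2 * r)).le_of_opNorm_le_of_le le_rfl hle
  have hconst : 2 * K * (2 * K * T / |r| * ‖amplitude r ψ 0‖) * T =
      4 * K ^ 2 * T ^ 2 / |r| * ‖amplitude r ψ 0‖ := by ring
  rw [hconst] at hfreeze
  rw [add_mul]
  refine (norm_le_norm_add_norm_sub' _ (oscillatoryIntegral q T (2 * r) (amplitude (-r) ψ 0))).trans
    (add_le_add hosc ?_)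
  rwa [sub_right_comm]

theorem eq_zero_of_dominant {δ : ℝ} (hψ : IsFloquetSolution q T ω (r ^ 2) ψ)
    (hq : Continuous q) (hT : 0 < T) (hω : ‖ω‖ = 1) (hK : ∀ x ∈ Icc 0 T, ‖q x‖ ≤ K)
    (hr : 2 * K * T < |r|) (hle : ‖amplitude (-r) ψ 0‖ ≤ ‖amplitude r ψ 0‖)
    (hδ : ∀ (s : ℝ) (w : E), δ * ‖w‖ ≤ ‖(∫ x in (0 : ℝ)..T, q x) w - (s : ℂ) • w‖)
    (hlt : ‖oscillatoryIntegral q T (2 * r)‖ + 8 * K ^ 2 * T ^ 2 / |r| < δ) : ψ = 0 := by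
  by_contra hψ₀
  have hne : amplitude r ψ 0 ≠ 0 := fun h => hψ₀ <| funext fun x => by
    simpa [h] using hψ.norm_apply_le hT hω hK hr hle x
  set ω' := Complex.exp (-(Complex.I * r * T)) * ω with hω'_def
  have hω' : ‖ω'‖ = 1 := by
    rw [hω'_def, norm_mul, norm_exp_neg_I_mul_ofReal_mul_ofReal, hω, one_mul]
  have hK₀ : 0 ≤ K := (norm_nonneg _).trans (hK 0 (left_mem_Icc.2 hT.le))
  have hr₀ : 0 < |r| := lt_of_le_of_lt (by positivity) hr
  have him : |(2 * Complex.I * r * (ω' - 1)).im| ≤ 4 * K ^ 2 * T ^ 2 / |r| := by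
    rw [abs_im_two_mul_I_mul_sub_one r hω']
    calc |r| * ‖ω' - 1‖ ^ 2 ≤ |r| * (2 * K * T / |r|) ^ 2 := by
          gcongr; exact hψ.norm_multiplier_sub_one_le hT hω hK hr hle hne
      _ = 4 * K ^ 2 * T ^ 2 / |r| := by field_simp; ring
  have happrox := hψ.norm_integral_apply_sub_smul_le hq hT hω hK hr hle
  have hδ_le := mul_norm_le_norm_sub_smul_add (hδ (2 * Complex.I * r * (ω' - 1)).re
    (amplitude r ψ 0))
  have hle_mul : δ * ‖amplitude r ψ 0‖ ≤
      (‖oscillatoryIntegral q T (2 * r)‖ + 8 * K ^ 2 * T ^ 2 / |r|) * ‖amplitude r ψ 0‖ := by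
    calc δ * ‖amplitude r ψ 0‖
      _ ≤ (‖oscillatoryIntegral q T (2 * r)‖ + 4 * K ^ 2 * T ^ 2 / |r|) * ‖amplitude r ψ 0‖ +
          4 * K ^ 2 * T ^ 2 / |r| * ‖amplitude r ψ 0‖ := hδ_le.trans (by gcongr)
      _ = _ := by ring
  exact hlt.not_ge (le_of_mul_le_mul_right hle_mul (norm_pos_iff.2 hne))

end Dominant
end IsFloquetSolution

section Spectrum

variable {E : Type*} [NormedAddCommGroup E] [NormedSpace ℂ E] {q : ℝ → E →L[ℂ] E} {T : ℝ}

theorem eventually_atBot_isFloquetSolution_eq_zero (hq : Continuous q) (hT : 0 < T) :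
    ∀ᶠ lam : ℝ in atBot, ∀ (ω : ℂ) (ψ : ℝ → E), ‖ω‖ = 1 →
      IsFloquetSolution q T ω lam ψ → ψ = 0 := by
  obtain ⟨K, hK⟩ := isCompact_Icc.exists_bound_of_continuousOn (s := Icc 0 T) hq.continuousOn
  filter_upwards [eventually_lt_atBot (-K)] with lam hlam ω ψ hω hψ
  exact hψ.eq_zero_of_lt_neg hT hω hK hlam

variable [CompleteSpace E]

theorem eventually_cocompact_isFloquetSolution_eq_zero (hq : Continuous q) (hT : 0 < T)
    (hA : ∀ s : ℝ, (s : ℂ) ∉ spectrum ℂ (∫ x in (0 : ℝ)..T, q x)) :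
    ∀ᶠ r : ℝ in cocompact ℝ, ∀ (ω : ℂ) (ψ : ℝ → E), ‖ω‖ = 1 →
      IsFloquetSolution q T ω (r ^ 2) ψ → ψ = 0 := by
  obtain ⟨K, hK⟩ := isCompact_Icc.exists_bound_of_continuousOn (s := Icc 0 T) hq.continuousOn
  obtain ⟨δ, hδ₀, hδ⟩ := exists_pos_mul_norm_le_norm_apply_sub_smul hA
  have habs : Tendsto (fun r : ℝ => |r|) (cocompact ℝ) atTop := tendsto_norm_cocompact_atTop
  have hdouble : Tendsto (fun r : ℝ => 2 * r) (cocompact ℝ) (cocompact ℝ) :=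
    (Homeomorph.mulLeft₀ (2 : ℝ) two_ne_zero).isClosedEmbedding.tendsto_cocompact
  have hneg : Tendsto (fun r : ℝ => -r) (cocompact ℝ) (cocompact ℝ) :=
    (Homeomorph.neg ℝ).isClosedEmbedding.tendsto_cocompact
  have herror : Tendsto
      (fun r : ℝ => ‖oscillatoryIntegral q T (2 * r)‖ + 8 * K ^ 2 * T ^ 2 / |r|)
      (cocompact ℝ) (𝓝 0) := by
    simpa using (((tendsto_oscillatoryIntegral_cocompact q hT.le).comp hdouble).norm).add
      (habs.const_div_atTop (8 * K ^ 2 * T ^ 2))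
  have hsmall := herror.eventually_lt_const hδ₀
  filter_upwards [hsmall, hneg.eventually hsmall, habs.eventually_gt_atTop (2 * K * T)]
    with r hpos_lt hneg_lt hr ω ψ hω hψ
  rcases le_total ‖amplitude (-r) ψ 0‖ ‖amplitude r ψ 0‖ with hle | hle
  · exact hψ.eq_zero_of_dominant hq hT hω hK hr hle hδ hpos_lt
  · exact hψ.neg_sq.eq_zero_of_dominant hq hT hω hK (by rwa [abs_neg]) (by rwa [neg_neg]) hδ hneg_lt

theorem eventually_atTop_isFloquetSolution_eq_zero (hq : Continuous q) (hT : 0 < T)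
    (hA : ∀ s : ℝ, (s : ℂ) ∉ spectrum ℂ (∫ x in (0 : ℝ)..T, q x)) :
    ∀ᶠ lam : ℝ in atTop, ∀ (ω : ℂ) (ψ : ℝ → E), ‖ω‖ = 1 →
      IsFloquetSolution q T ω lam ψ → ψ = 0 := by
  have hsqrt := (Real.tendsto_sqrt_atTop.mono_right atTop_le_cocompact).eventually
    (eventually_cocompact_isFloquetSolution_eq_zero hq hT hA)
  filter_upwards [hsqrt, eventually_ge_atTop 0] with lam hlam hlam₀ ω ψ hω hψ
  refine hlam ω ψ hω ?_
  rwa [← Complex.ofReal_pow, Real.sq_sqrt hlam₀]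

theorem statement14_general (hq : Continuous q) (hT : 0 < T)
    (hA : ∀ s : ℝ, (s : ℂ) ∉ spectrum ℂ (∫ x in (0 : ℝ)..T, q x)) :
    ∃ a b : ℝ, a ≤ b ∧ ∀ (lam : ℝ) (ω : ℂ) (ψ : ℝ → E), ‖ω‖ = 1 → ψ ≠ 0 →
      IsFloquetSolution q T ω lam ψ → lam ∈ Icc a b := by
  obtain ⟨a, ha⟩ := eventually_atBot.1 (eventually_atBot_isFloquetSolution_eq_zero hq hT)
  obtain ⟨b, hb⟩ := eventually_atTop.1 (eventually_atTop_isFloquetSolution_eq_zero hq hT hA)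
  refine ⟨min a b, max a b, min_le_max, fun lam ω ψ hω hne hψ => ⟨?_, ?_⟩⟩
  · by_contra! hlt
    exact hne (ha lam (hlt.le.trans (min_le_left a b)) ω ψ hω hψ)
  · by_contra! hlt
    exact hne (hb lam ((le_max_right a b).trans hlt.le) ω ψ hω hψ)

end Spectrum

section Matrix

variable {m : ℕ}

/-- The action of matrices on column vectors, as an isomorphism onto the algebra of continuous
endomorphisms of `ℂ^m`; its only role is to transport the spectrum. -/
def mulVecAlgEquiv (m : ℕ) :
    Matrix (Fin m) (Fin m) ℂ ≃ₐ[ℂ] ((Fin m → ℂ) →L[ℂ] (Fin m → ℂ)) :=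
  Matrix.toLinAlgEquiv'.trans (Module.End.toContinuousLinearMap (Fin m → ℂ))

theorem mulVecAlgEquiv_apply (M : Matrix (Fin m) (Fin m) ℂ) (w : Fin m → ℂ) :
    mulVecAlgEquiv m M w = M.mulVec w :=
  rfl

theorem continuous_mulVecAlgEquiv : Continuous (mulVecAlgEquiv m) :=
  (mulVecAlgEquiv m).toLinearMap.continuous_of_finiteDimensional

theorem intervalIntegral_mulVecAlgEquiv {Q : ℝ → Matrix (Fin m) (Fin m) ℂ} (hQ : Continuous Q) :
    ∫ x in (0 : ℝ)..Real.pi, mulVecAlgEquiv m (Q x) = mulVecAlgEquiv m (meanMatrix Q) := by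
  have hentry (i j : Fin m) : IntervalIntegrable (fun x => Q x i j) volume 0 Real.pi :=
    (hQ.matrix_elem i j).intervalIntegrable _ _
  have hint : IntervalIntegrable (fun x => mulVecAlgEquiv m (Q x)) volume 0 Real.pi :=
    (continuous_mulVecAlgEquiv.comp hQ).intervalIntegrable _ _
  refine ContinuousLinearMap.ext fun w => funext fun i => ?_
  have hint_apply : IntervalIntegrable (fun x => mulVecAlgEquiv m (Q x) w) volume 0 Real.pi :=
    ((continuous_mulVecAlgEquiv.comp hQ).clm_apply continuous_const).intervalIntegrable _ _
  rw [ContinuousLinearMap.intervalIntegral_apply hint]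
  refine ((ContinuousLinearMap.proj (R := ℂ) (φ := fun _ : Fin m => ℂ)
    i).intervalIntegral_comp_comm hint_apply).symm.trans ?_
  simp only [ContinuousLinearMap.proj_apply, mulVecAlgEquiv_apply, Matrix.mulVec, dotProduct,
    meanMatrix, Matrix.of_apply]
  rw [intervalIntegral.integral_finsetSum fun j _ => (hentry i j).mul_const _]
  simp only [intervalIntegral.integral_mul_const]

theorem ofReal_notMem_spectrum_intervalIntegral {Q : ℝ → Matrix (Fin m) (Fin m) ℂ}
    (hQ : Continuous Q) (hA : ∀ μ : ℂ, (meanMatrix Q).charpoly.IsRoot μ → μ.im ≠ 0) (s : ℝ) :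
    (s : ℂ) ∉ spectrum ℂ (∫ x in (0 : ℝ)..Real.pi, mulVecAlgEquiv m (Q x)) := by
  rw [intervalIntegral_mulVecAlgEquiv hQ, AlgEquiv.spectrum_eq,
    Matrix.mem_spectrum_iff_isRoot_charpoly]
  exact fun hroot => hA s hroot (Complex.ofReal_im s)

theorem IsBlochPair.isFloquetSolution {Q : ℝ → Matrix (Fin m) (Fin m) ℂ} {t : ℝ} {lam : ℂ}
    {Ψ : ℝ → Fin m → ℂ} (h : IsBlochPair Q t lam Ψ) :
    IsFloquetSolution (fun x => mulVecAlgEquiv m (Q x)) Real.pi (blochPhase t) lam Ψ := by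
  obtain ⟨-, hsmooth, hode, hper⟩ := h
  refine ⟨hsmooth.differentiable two_ne_zero, fun x => ?_, hper⟩
  have hderiv : deriv (deriv Ψ) x = mulVecAlgEquiv m (Q x) (Ψ x) - lam • Ψ x := by
    rw [mulVecAlgEquiv_apply, ← hode x]
    abel
  exact hderiv ▸ (hsmooth.differentiable_deriv_two x).hasDerivAt

end Matrix

/-- if `A = ∫₀^π Q(x) dx` has no real eigenvalues, then the real
component of the spectrum of `L(Q)` is contained in a finite interval `[a,b]`. -/
theorem statement14 {m : ℕ} (hm : 1 ≤ m) (Q : ℝ → Matrix (Fin m) (Fin m) ℂ)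
    (hQcont : Continuous Q)
    (hQper : ∀ x : ℝ, Q (x + Real.pi) = Q x)
    (hA : ∀ μ : ℂ, (meanMatrix Q).charpoly.IsRoot μ → μ.im ≠ 0) :
    ∃ a b : ℝ, a ≤ b ∧
      ∀ lam : ℂ, lam ∈ SpecLQ Q → lam.im = 0 → lam.re ∈ Set.Icc a b := by
  obtain ⟨a, b, hab, hmem⟩ := statement14_general (continuous_mulVecAlgEquiv.comp hQcont)
    Real.pi_pos (ofReal_notMem_spectrum_intervalIntegral hQcont hA)
  refine ⟨a, b, hab, fun lam ⟨t, _, Ψ, hΨ⟩ him => ?_⟩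
  lift lam to ℝ using him
  exact hmem lam (blochPhase t) Ψ (norm_blochPhase t) hΨ.1 hΨ.isFloquetSolution
end
end

section
/- Suppose the matrix A has a real eigenvalue μ_j of odd algebraic multiplicity. Then there exist a positive integer N, a constant c₁₁ > 0, and a sequence of positive reals δ_k with δ_k → 0 as k → ∞, such that for every integer k ≥ N there are finitely many pairwise disjoint closed intervals Γ_{k,j,1}, …, Γ_{k,j,l} contained both in σ(L(Q)) ∩ ℝ and in the interval Γ_{k,j} = (μ_j + (2k−1)², μ_j + (2k+1)²], whose total length satisfies |Γ_{k,j}| − Σ_{i=1}^{l} |Γ_{k,j,i}| < c₁₁ δ_k. -/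
open MeasureTheory Set Filter Topology Metric

open scoped Classical

noncomputable section

/-!
In the amplitudes of the waves `e^{±isx}` the equation `-Ψ'' + QΨ = s²Ψ` is a first-order linear
system, and PT symmetry says that its monodromy matrix `M` satisfies `M̄ M = 1`. Hence
`det (M - e^{iφ})`, normalized by `e^{-imφ}`, has an argument independent of `φ` modulo `π`, and a
sign change in `φ` yields an eigenvalue of `M` on the unit circle, that is, `s² ∈ σ(L(Q))`.

As `s → ∞`, at the phases `φ = πs - κ / (2s)` the rescaled determinant tends to
`det (A - κ) · det ((p - qκ) - qA)`, where `q + ip` is a limit direction of `cos πs + 4is sin πs`.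
By odd multiplicity the first factor changes sign at `κ = μ_j`, so `s² ∈ σ(L(Q))` unless the second
factor changes sign there too. The latter forces `s²` to be close to some `n² + (μ_j + μ) / (2π)`
with `n` an integer and `μ` a real eigenvalue of `A`. At most `3m` such points matter for `Γ_{k,j}`,
and removing arbitrarily small balls around them leaves finitely many intervals of the spectrum.
-/

/-! ### The fundamental solution of a linear equation in a Banach algebra -/

section LinearODE

theorem exists_norm_le_of_abs_le {V : Type*} [SeminormedAddCommGroup V] {f : ℝ → V}
    (hf : Continuous f) (R : ℝ) : ∃ K, ∀ x, |x| ≤ R → ‖f x‖ ≤ K := by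
  obtain ⟨K, hK⟩ := (isCompact_Icc (a := -R) (b := R)).exists_bound_of_continuousOn hf.continuousOn
  exact ⟨K, fun x hx => hK x (abs_le.mp hx)⟩

variable {𝔸 : Type*} [NormedRing 𝔸] [NormedAlgebra ℝ 𝔸]

/-- The `n`-th term of the Dyson series (the iterated Volterra integral) of `Y' = E Y`,
`Y 0 = 1`. -/
def dysonTerm (E : ℝ → 𝔸) : ℕ → ℝ → 𝔸
  | 0 => fun _ => 1
  | n + 1 => fun x => ∫ y in (0 : ℝ)..x, E y * dysonTerm E n y

/-- The solution of `Y' = E Y`, `Y 0 = 1`, as the sum of its Dyson series. -/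
def fundamentalSolution (E : ℝ → 𝔸) (x : ℝ) : 𝔸 := ∑' n, dysonTerm E n x

variable {E : ℝ → 𝔸}

theorem norm_dysonTerm_le {K R : ℝ} (hK : ∀ x, |x| ≤ R → ‖E x‖ ≤ K) (n : ℕ) {x : ℝ}
    (hx : |x| ≤ R) : ‖dysonTerm E n x‖ ≤ ‖(1 : 𝔸)‖ * ((K * |x|) ^ n / n.factorial) := by
  have hK₀ : 0 ≤ K := (norm_nonneg _).trans (hK x hx)
  induction n generalizing x with
  | zero => simp [dysonTerm]
  | succ n ih =>
    have hbound : ∀ y ∈ uIoc 0 x, ‖E y * dysonTerm E n y‖ ≤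
        ‖(1 : 𝔸)‖ * (K ^ (n + 1) / n.factorial) * |y - 0| ^ n := by
      intro y hy
      have hyR : |y| ≤ R := by
        have := abs_sub_left_of_mem_uIcc (uIoc_subset_uIcc hy)
        simp only [sub_zero] at this
        exact this.trans hx
      calc ‖E y * dysonTerm E n y‖
          ≤ K * (‖(1 : 𝔸)‖ * ((K * |y|) ^ n / n.factorial)) :=
            (norm_mul_le _ _).trans (mul_le_mul (hK y hyR) (ih hyR) (norm_nonneg _) hK₀)
        _ = ‖(1 : 𝔸)‖ * (K ^ (n + 1) / n.factorial) * |y - 0| ^ n := by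
            rw [sub_zero, mul_pow]; ring
    have hintegrable : IntegrableOn (fun y : ℝ => |y - 0| ^ n) (uIoc 0 x) :=
      ((by fun_prop : Continuous fun y : ℝ => |y - 0| ^ n).intervalIntegrable 0 x).def'
    calc ‖dysonTerm E (n + 1) x‖
        = ‖∫ y in uIoc 0 x, E y * dysonTerm E n y‖ :=
          intervalIntegral.norm_intervalIntegral_eq _ _ _ _
      _ ≤ ∫ y in uIoc 0 x, ‖(1 : 𝔸)‖ * (K ^ (n + 1) / n.factorial) * |y - 0| ^ n :=
          norm_integral_le_of_norm_le (hintegrable.const_mul _)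
            ((ae_restrict_iff' measurableSet_uIoc).mpr (ae_of_all _ hbound))
      _ = ‖(1 : 𝔸)‖ * ((K * |x|) ^ (n + 1) / (n + 1).factorial) := by
          rw [integral_const_mul, integral_pow_abs_sub_uIoc, sub_zero, Nat.factorial_succ]
          push_cast
          field_simp
          ring

theorem summable_dysonTerm (hE : Continuous E) [CompleteSpace 𝔸] (x : ℝ) :
    Summable fun n => dysonTerm E n x := by
  obtain ⟨K, hK⟩ := exists_norm_le_of_abs_le hE |x|
  exact .of_norm_bounded ((Real.summable_pow_div_factorial (K * |x|)).mul_left _)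
    fun n => norm_dysonTerm_le hK n le_rfl

@[simp]
theorem fundamentalSolution_zero (E : ℝ → 𝔸) : fundamentalSolution E 0 = 1 := by
  refine (tsum_eq_single 0 fun n hn => ?_).trans rfl
  obtain ⟨n, rfl⟩ := Nat.exists_eq_succ_of_ne_zero hn
  exact intervalIntegral.integral_same

theorem continuous_dysonTerm (hE : Continuous E) (n : ℕ) : Continuous (dysonTerm E n) := by
  induction n with
  | zero => exact continuous_const
  | succ n ih =>
    exact intervalIntegral.continuous_primitive (fun a b => (hE.mul ih).intervalIntegrable a b) 0

variable [CompleteSpace 𝔸]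

theorem fundamentalSolution_eq_one_add (hE : Continuous E) (x : ℝ) :
    fundamentalSolution E x = 1 + ∑' n, dysonTerm E (n + 1) x :=
  (summable_dysonTerm hE x).tsum_eq_zero_add

theorem hasDerivAt_dysonTerm_succ (hE : Continuous E) (n : ℕ) (x : ℝ) :
    HasDerivAt (dysonTerm E (n + 1)) (E x * dysonTerm E n x) x :=
  have hc := hE.mul (continuous_dysonTerm hE n)
  intervalIntegral.integral_hasDerivAt_right (hc.intervalIntegrable _ _)
    hc.stronglyMeasurable.stronglyMeasurableAtFilter hc.continuousAt

theorem hasDerivAt_fundamentalSolution (hE : Continuous E) (x : ℝ) :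
    HasDerivAt (fundamentalSolution E) (E x * fundamentalSolution E x) x := by
  obtain ⟨K, hK⟩ := exists_norm_le_of_abs_le hE (|x| + 1)
  have hK₀ : 0 ≤ K := (norm_nonneg _).trans (hK x (by linarith))
  have hbound : ∀ n, ∀ y ∈ ball (0 : ℝ) (|x| + 1), ‖E y * dysonTerm E n y‖ ≤
      K * (‖(1 : 𝔸)‖ * ((K * (|x| + 1)) ^ n / n.factorial)) := fun n y hy => by
    have hy : |y| ≤ |x| + 1 := (mem_ball_zero_iff.mp hy).le
    refine (norm_mul_le _ _).trans
      (mul_le_mul (hK y hy) ((norm_dysonTerm_le hK n hy).trans ?_) (norm_nonneg _) hK₀)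
    gcongr
  have hderiv := hasDerivAt_tsum_of_isPreconnected
    (((Real.summable_pow_div_factorial (K * (|x| + 1))).mul_left _).mul_left K)
    isOpen_ball (convex_ball _ _).isPreconnected
    (fun n y _ => hasDerivAt_dysonTerm_succ hE n y) hbound
    (mem_ball_zero_iff.mpr (lt_add_one _))
    ((summable_nat_add_iff 1).mpr (summable_dysonTerm hE x)) (mem_ball_zero_iff.mpr (lt_add_one _))
  rw [(summable_dysonTerm hE x).tsum_mul_left] at hderiv
  exact (hderiv.const_add 1).congr_of_eventuallyEq
    (.of_forall (fundamentalSolution_eq_one_add hE))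

theorem eq_fundamentalSolution_mul (hE : Continuous E) {f : ℝ → 𝔸}
    (hf : ∀ x, HasDerivAt f (E x * f x) x) (x : ℝ) : f x = fundamentalSolution E x * f 0 := by
  obtain ⟨K, hK⟩ := exists_norm_le_of_abs_le hE (|x| + 1)
  have hK₀ : 0 ≤ K := (norm_nonneg _).trans (hK x (by linarith))
  have hLip : ∀ y ∈ Ioo (-(|x| + 1)) (|x| + 1),
      LipschitzOnWith ⟨K, hK₀⟩ (fun u => E y * u) univ := fun y hy =>
    LipschitzOnWith.of_dist_le_mul fun u _ v _ => by
      rw [dist_eq_norm, dist_eq_norm, ← mul_sub]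
      exact (norm_mul_le _ _).trans
        (mul_le_mul_of_nonneg_right (hK y (abs_le.mpr ⟨hy.1.le, hy.2.le⟩)) (norm_nonneg _))
  have hg : ∀ y, HasDerivAt (fun y => fundamentalSolution E y * f 0)
      (E y * (fundamentalSolution E y * f 0)) y := fun y => by
    simpa only [mul_assoc] using (hasDerivAt_fundamentalSolution hE y).mul_const (f 0)
  have hmem : ∀ y, |y| < |x| + 1 → y ∈ Ioo (-(|x| + 1)) (|x| + 1) := fun y => abs_lt.mp
  exact ODE_solution_unique_of_mem_Ioo hLip (hmem 0 (by rw [abs_zero]; positivity))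
    (fun y _ => ⟨hf y, mem_univ _⟩) (fun y _ => ⟨hg y, mem_univ _⟩) (by simp)
    (hmem x (lt_add_one _))

theorem fundamentalSolution_add_period (hE : Continuous E) {T : ℝ} (hT : Function.Periodic E T)
    (x : ℝ) :
    fundamentalSolution E (x + T) = fundamentalSolution E x * fundamentalSolution E T := by
  have hshift : ∀ y, HasDerivAt (fun y => fundamentalSolution E (y + T))
      (E y * fundamentalSolution E (y + T)) y := fun y => by
    simpa only [hT y] using (hasDerivAt_fundamentalSolution hE (y + T)).comp_add_const y T
  simpa only [zero_add] using eq_fundamentalSolution_mul hE hshift x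

theorem map_fundamentalSolution_neg (hE : Continuous E) {τ : 𝔸 →ₐ[ℝ] 𝔸} (hτ : Continuous τ)
    (hEτ : ∀ x, τ (E (-x)) = -E x) (x : ℝ) :
    τ (fundamentalSolution E (-x)) = fundamentalSolution E x := by
  let τL : 𝔸 →L[ℝ] 𝔸 := ⟨τ.toLinearMap, hτ⟩
  have hderiv : ∀ y, HasDerivAt (fun y => τ (fundamentalSolution E (-y)))
      (E y * τ (fundamentalSolution E (-y))) y := fun y => by
    refine (τL.hasFDerivAt.comp_hasDerivAt y
      ((hasDerivAt_fundamentalSolution hE (-y)).scomp y (hasDerivAt_neg y))).congr_deriv ?_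
    change τ _ = _
    rw [neg_one_smul, map_neg, map_mul, hEτ, neg_mul, neg_neg]
  simpa using eq_fundamentalSolution_mul hE hderiv x

theorem map_fundamentalSolution_mul_self (hE : Continuous E) {τ : 𝔸 →ₐ[ℝ] 𝔸}
    (hτ : Continuous τ) (hEτ : ∀ x, τ (E (-x)) = -E x) {T : ℝ} (hT : Function.Periodic E T) :
    τ (fundamentalSolution E T) * fundamentalSolution E T = 1 := by
  have h := fundamentalSolution_add_period hE hT (-T)
  rwa [neg_add_cancel, fundamentalSolution_zero, ← map_fundamentalSolution_neg hE hτ hEτ (-T),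
    neg_neg, eq_comm] at h

theorem norm_fundamentalSolution_sub_le (hE : Continuous E) {K R : ℝ}
    (hK : ∀ x, |x| ≤ R → ‖E x‖ ≤ K) {x : ℝ} (hx : |x| ≤ R) :
    ‖fundamentalSolution E x - 1 - ∫ y in (0 : ℝ)..x, E y‖ ≤
      ‖(1 : 𝔸)‖ * ((K * |x|) ^ 2 * Real.exp (K * |x|)) := by
  have hK₀ : 0 ≤ K := (norm_nonneg _).trans (hK x hx)
  have htail : fundamentalSolution E x - 1 - ∫ y in (0 : ℝ)..x, E y =
      ∑' n, dysonTerm E (n + 2) x := by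
    rw [fundamentalSolution_eq_one_add hE,
      ((summable_nat_add_iff 1).mpr (summable_dysonTerm hE x)).tsum_eq_zero_add]
    simp [dysonTerm]
  rw [htail]
  have hexp := (NormedSpace.expSeries_div_hasSum_exp (𝔸 := ℝ) (K * |x|)).mul_left ((K * |x|) ^ 2)
  rw [← Real.exp_eq_exp_ℝ] at hexp
  refine tsum_of_norm_bounded (hexp.mul_left ‖(1 : 𝔸)‖) fun n =>
    (norm_dysonTerm_le hK (n + 2) hx).trans ?_
  rw [pow_add, mul_comm (_ ^ n), mul_div_assoc]
  gcongr
  omega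

end LinearODE

/-! ### Eigenvalues on the unit circle of matrices with `M̄ M = 1` -/

section PhaseDet

variable {ι : Type*} [Fintype ι] [DecidableEq ι]

/-- The characteristic determinant `det (M - e^{iφ})`, normalized by the half power
`e^{-iφn/2}` so that its argument does not depend on `φ` up to sign when `M̄ M = 1`. -/
def phaseDet (M : Matrix ι ι ℂ) (φ : ℝ) : ℂ :=
  Complex.exp (-(φ * Complex.I * (Fintype.card ι / 2))) *
    (M - Complex.exp (φ * Complex.I) • (1 : Matrix ι ι ℂ)).det

theorem continuous_phaseDet (M : Matrix ι ι ℂ) : Continuous (phaseDet M) := by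
  unfold phaseDet
  fun_prop

theorem det_sub_exp_eq_zero_of_phaseDet_eq_zero {M : Matrix ι ι ℂ} {φ : ℝ}
    (h : phaseDet M φ = 0) : (M - Complex.exp (φ * Complex.I) • (1 : Matrix ι ι ℂ)).det = 0 :=
  (mul_eq_zero.mp h).resolve_left (Complex.exp_ne_zero _)

theorem conj_phaseDet {M : Matrix ι ι ℂ} (hM : M.map (starRingEnd ℂ) * M = 1) (φ : ℝ) :
    starRingEnd ℂ (phaseDet M φ) =
      (-1) ^ Fintype.card ι * (M.map (starRingEnd ℂ)).det * phaseDet M φ := by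
  set n := Fintype.card ι
  set N := M.map (starRingEnd ℂ)
  have hconj : starRingEnd ℂ (M - Complex.exp (φ * Complex.I) • (1 : Matrix ι ι ℂ)).det =
      (N - Complex.exp (-(φ * Complex.I)) • (1 : Matrix ι ι ℂ)).det := by
    rw [RingHom.map_det]
    congr 1
    ext i j
    simp [N, Matrix.one_apply, apply_ite (starRingEnd ℂ), ← Complex.exp_conj]
  have hswap : N.det * (M - Complex.exp (φ * Complex.I) • (1 : Matrix ι ι ℂ)).det =
      (-Complex.exp (φ * Complex.I)) ^ n *
        (N - Complex.exp (-(φ * Complex.I)) • (1 : Matrix ι ι ℂ)).det := by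
    rw [← Matrix.det_mul, ← Matrix.det_smul, mul_sub, hM, smul_sub, smul_smul, neg_mul,
      ← Complex.exp_add, add_neg_cancel, Complex.exp_zero, mul_smul_comm, mul_one, neg_smul,
      neg_smul, one_smul, sub_neg_eq_add, neg_add_eq_sub]
  have hexp : Complex.exp (φ * Complex.I * (n / 2)) =
      Complex.exp (-(φ * Complex.I * (n / 2))) * Complex.exp (φ * Complex.I) ^ n := by
    rw [← Complex.exp_nat_mul, ← Complex.exp_add]
    ring_nf
  have hphase : starRingEnd ℂ (Complex.exp (-(φ * Complex.I * (n / 2)))) =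
      Complex.exp (φ * Complex.I * (n / 2)) := by
    simp [← Complex.exp_conj, Complex.conj_ofNat]
  rw [phaseDet, map_mul, hconj, hphase, hexp, mul_assoc _ N.det, mul_left_comm N.det, hswap,
    neg_pow]
  have hone : ((-1 : ℂ) ^ n) * (-1) ^ n = 1 := by rw [← mul_pow]; norm_num
  linear_combination (-(Complex.exp (-(φ * Complex.I * (n / 2))) * Complex.exp (φ * Complex.I) ^ n *
    (N - Complex.exp (-(φ * Complex.I)) • (1 : Matrix ι ι ℂ)).det)) * hone

theorem exists_det_sub_exp_eq_zero {M : Matrix ι ι ℂ} (hM : M.map (starRingEnd ℂ) * M = 1)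
    {φ₁ φ₂ : ℝ} (h : (phaseDet M φ₁ * starRingEnd ℂ (phaseDet M φ₂)).re < 0) :
    ∃ φ : ℝ, (M - Complex.exp (φ * Complex.I) • (1 : Matrix ι ι ℂ)).det = 0 := by
  let P : ℝ → ℂ := fun φ => phaseDet M φ₁ * starRingEnd ℂ (phaseDet M φ)
  have him : ∀ φ, (P φ).im = 0 := fun φ => by
    simp only [P, ← Complex.conj_eq_iff_im, map_mul, Complex.conj_conj]
    rw [conj_phaseDet hM φ₁, conj_phaseDet hM φ]
    ring
  have hcont : Continuous fun φ => (P φ).re :=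
    Complex.continuous_re.comp
      (continuous_const.mul (Complex.continuous_conj.comp (continuous_phaseDet M)))
  have hnonneg : 0 ≤ (P φ₁).re := by
    simp only [P, Complex.mul_conj, Complex.ofReal_re]
    exact Complex.normSq_nonneg _
  obtain ⟨φ, hφ⟩ := mem_range_of_exists_le_of_exists_ge hcont ⟨φ₂, h.le⟩ ⟨φ₁, hnonneg⟩
  rcases mul_eq_zero.mp (Complex.ext hφ (him φ) : P φ = 0) with h₁ | h₂
  · exact ⟨φ₁, det_sub_exp_eq_zero_of_phaseDet_eq_zero h₁⟩
  · exact ⟨φ, det_sub_exp_eq_zero_of_phaseDet_eq_zero ((map_eq_zero _).mp h₂)⟩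

end PhaseDet

/-! ### The monodromy matrix -/

section Monodromy

open scoped Matrix

attribute [local instance] Matrix.linftyOpNormedRing Matrix.linftyOpNormedAlgebra

variable {ι : Type*}

/-- The value `Ψ = a + b` encoded by the pair `(a, b)` of amplitudes of the waves `e^{±isx}`. -/
def wavePosition (ι : Type*) : (ι ⊕ ι → ℂ) →L[ℂ] (ι → ℂ) :=
  .pi fun i => .proj (.inl i) + .proj (.inr i)

/-- The derivative `Ψ' = is(a - b)` encoded by the pair `(a, b)` of amplitudes. -/
def waveMomentum (ι : Type*) (s : ℝ) : (ι ⊕ ι → ℂ) →L[ℂ] (ι → ℂ) :=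
  (Complex.I * s) • .pi fun i => .proj (.inl i) - .proj (.inr i)

theorem wavePosition_apply (v : ι ⊕ ι → ℂ) (i : ι) :
    wavePosition ι v i = v (.inl i) + v (.inr i) := rfl

theorem waveMomentum_apply (s : ℝ) (v : ι ⊕ ι → ℂ) (i : ι) :
    waveMomentum ι s v i = Complex.I * s * (v (.inl i) - v (.inr i)) := rfl

theorem eq_zero_of_wavePosition_eq_zero_of_waveMomentum_eq_zero {s : ℝ} (hs : s ≠ 0)
    {v : ι ⊕ ι → ℂ} (hpos : wavePosition ι v = 0) (hmom : waveMomentum ι s v = 0) : v = 0 := by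
  have hadd : ∀ i, v (.inl i) + v (.inr i) = 0 := congrFun hpos
  have hsub : ∀ i, v (.inl i) - v (.inr i) = 0 := fun i =>
    (mul_eq_zero.mp (congrFun hmom i)).resolve_left
      (mul_ne_zero Complex.I_ne_zero (by exact_mod_cast hs))
  have hinl : ∀ i, v (.inl i) = 0 := fun i => by linear_combination (hadd i + hsub i) / 2
  have hinr : ∀ i, v (.inr i) = 0 := fun i => by linear_combination (hadd i - hsub i) / 2
  exact funext (Sum.rec hinl hinr)

variable [DecidableEq ι]

/-- The block diagonal matrix `diag (a, b)` with scalar blocks. -/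
def scalarBlocks (ι : Type*) [DecidableEq ι] (a b : ℂ) : Matrix (ι ⊕ ι) (ι ⊕ ι) ℂ :=
  Matrix.fromBlocks (a • 1) 0 0 (b • 1)

theorem scalarBlocks_one_one : scalarBlocks ι 1 1 = 1 := by
  simp [scalarBlocks]

theorem smul_one_eq_scalarBlocks (a : ℂ) :
    a • (1 : Matrix (ι ⊕ ι) (ι ⊕ ι) ℂ) = scalarBlocks ι a a := by
  simp [scalarBlocks, ← Matrix.fromBlocks_one, Matrix.fromBlocks_smul]

theorem continuous_scalarBlocks : Continuous fun c : ℂ × ℂ => scalarBlocks ι c.1 c.2 := by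
  unfold scalarBlocks
  fun_prop

/-- The first-order system equivalent to `-Ψ'' + QΨ = s²Ψ` in the coordinates `(a, b)` of
`wavePosition` and `waveMomentum`. -/
def blochSystem (Q : ℝ → Matrix ι ι ℂ) (s x : ℝ) : Matrix (ι ⊕ ι) (ι ⊕ ι) ℂ :=
  scalarBlocks ι (Complex.I * s) (-(Complex.I * s)) +
    (2 * Complex.I * s)⁻¹ • Matrix.fromBlocks (Q x) (Q x) (-Q x) (-Q x)

variable {Q : ℝ → Matrix ι ι ℂ}

theorem continuous_blochSystem (hQ : Continuous Q) (s : ℝ) : Continuous (blochSystem Q s) := by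
  unfold blochSystem
  fun_prop

theorem periodic_blochSystem {T : ℝ} (hper : Function.Periodic Q T) (s : ℝ) :
    Function.Periodic (blochSystem Q s) T := fun x => by
  simp only [blochSystem, hper x]

theorem map_conj_blochSystem_neg (hPT : ∀ x, (Q (-x)).map (starRingEnd ℂ) = Q x) (s x : ℝ) :
    (blochSystem Q s (-x)).map (starRingEnd ℂ) = -blochSystem Q s x := by
  have hPT' : ∀ i j, starRingEnd ℂ (Q (-x) i j) = Q x i j := fun i j => congrFun₂ (hPT x) i j
  ext (i | i) (j | j) <;>
    simp [blochSystem, scalarBlocks, Matrix.one_apply, hPT', apply_ite (starRingEnd ℂ),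
      Complex.conj_ofNat, add_comm] <;>
    split_ifs <;> simp

variable [Fintype ι]

/-- The transfer matrix over the period `π` of `blochSystem`. -/
def monodromy (Q : ℝ → Matrix ι ι ℂ) (s : ℝ) : Matrix (ι ⊕ ι) (ι ⊕ ι) ℂ :=
  fundamentalSolution (blochSystem Q s) Real.pi

theorem scalarBlocks_mul_fromBlocks (a b : ℂ) (A B C D : Matrix ι ι ℂ) :
    scalarBlocks ι a b * Matrix.fromBlocks A B C D =
      Matrix.fromBlocks (a • A) (a • B) (b • C) (b • D) := by
  simp [scalarBlocks, Matrix.fromBlocks_multiply]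

theorem fromBlocks_mul_scalarBlocks (a b : ℂ) (A B C D : Matrix ι ι ℂ) :
    Matrix.fromBlocks A B C D * scalarBlocks ι a b =
      Matrix.fromBlocks (a • A) (b • B) (a • C) (b • D) := by
  simp [scalarBlocks, Matrix.fromBlocks_multiply]

@[simp]
theorem scalarBlocks_mul_scalarBlocks (a b c d : ℂ) :
    scalarBlocks ι a b * scalarBlocks ι c d = scalarBlocks ι (a * c) (b * d) := by
  rw [scalarBlocks, fromBlocks_mul_scalarBlocks, scalarBlocks]
  simp [smul_smul, mul_comm]

theorem map_conj_monodromy_mul_self (hQ : Continuous Q) (hper : Function.Periodic Q Real.pi)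
    (hPT : ∀ x, (Q (-x)).map (starRingEnd ℂ) = Q x) (s : ℝ) :
    (monodromy Q s).map (starRingEnd ℂ) * monodromy Q s = 1 :=
  map_fundamentalSolution_mul_self (continuous_blochSystem hQ s)
    (τ := Complex.conjAe.toAlgHom.mapMatrix) (continuous_id.matrix_map Complex.continuous_conj)
    (map_conj_blochSystem_neg hPT s) (periodic_blochSystem hper s)

theorem contDiff_two_of_hasDerivAt {V : Type*} [NormedAddCommGroup V] [NormedSpace ℝ V]
    {f f' f'' : ℝ → V} (hf : ∀ x, HasDerivAt f (f' x) x) (hf' : ∀ x, HasDerivAt f' (f'' x) x)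
    (hf'' : Continuous f'') : ContDiff ℝ 2 f := by
  have hderiv : deriv f = f' := funext fun x => (hf x).deriv
  have hderiv' : deriv f' = f'' := funext fun x => (hf' x).deriv
  rw [show (2 : WithTop ℕ∞) = 1 + 1 by norm_num, contDiff_succ_iff_deriv, hderiv,
    contDiff_one_iff_deriv, hderiv']
  exact ⟨fun x => (hf x).differentiableAt, by simp, fun x => (hf' x).differentiableAt, hf''⟩

theorem exists_blochPhase_eq_exp (φ : ℝ) :
    ∃ t ∈ Ioc (-1 : ℝ) 1, blochPhase t = Complex.exp (φ * Complex.I) := by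
  set z := Complex.exp (φ * Complex.I)
  refine ⟨z.arg / Real.pi, ⟨?_, ?_⟩, ?_⟩
  · rw [lt_div_iff₀ Real.pi_pos]
    linarith [Complex.neg_pi_lt_arg z]
  · exact (div_le_one Real.pi_pos).mpr (Complex.arg_le_pi z)
  · have hpolar := Complex.norm_mul_exp_arg_mul_I z
    rw [Complex.norm_exp_ofReal_mul_I, Complex.ofReal_one, one_mul] at hpolar
    refine (congrArg Complex.exp ?_).trans hpolar
    have : (Real.pi : ℂ) ≠ 0 := by exact_mod_cast Real.pi_ne_zero
    push_cast
    field_simp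

theorem blochSystem_mulVec (Q : ℝ → Matrix ι ι ℂ) (s x : ℝ) (v : ι ⊕ ι → ℂ) :
    blochSystem Q s x *ᵥ v = Sum.elim
      (fun i => Complex.I * s * v (.inl i) + (2 * Complex.I * s)⁻¹ * (Q x *ᵥ wavePosition ι v) i)
      fun i =>
        -(Complex.I * s * v (.inr i)) - (2 * Complex.I * s)⁻¹ * (Q x *ᵥ wavePosition ι v) i := by
  have hsum : Q x *ᵥ wavePosition ι v = Q x *ᵥ (v ∘ .inl) + Q x *ᵥ (v ∘ .inr) :=
    Matrix.mulVec_add _ _ _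
  ext (i | i) <;>
    simp only [blochSystem, scalarBlocks, Matrix.add_mulVec, Matrix.smul_mulVec, Matrix.neg_mulVec,
      Matrix.fromBlocks_mulVec, Matrix.one_mulVec, Matrix.zero_mulVec, hsum, Pi.add_apply,
      Pi.smul_apply, Pi.neg_apply, Sum.elim_inl, Sum.elim_inr, Function.comp_apply, smul_eq_mul,
      add_zero, zero_add]
  ring

theorem wavePosition_blochSystem_mulVec (Q : ℝ → Matrix ι ι ℂ) (s x : ℝ) (v : ι ⊕ ι → ℂ) :
    wavePosition ι (blochSystem Q s x *ᵥ v) = waveMomentum ι s v := by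
  ext i
  rw [wavePosition_apply, waveMomentum_apply, blochSystem_mulVec, Sum.elim_inl, Sum.elim_inr]
  ring

theorem waveMomentum_blochSystem_mulVec (Q : ℝ → Matrix ι ι ℂ) {s : ℝ} (hs : s ≠ 0) (x : ℝ)
    (v : ι ⊕ ι → ℂ) :
    waveMomentum ι s (blochSystem Q s x *ᵥ v) =
      Q x *ᵥ wavePosition ι v - (s : ℂ) ^ 2 • wavePosition ι v := by
  have his : 2 * Complex.I * s ≠ 0 :=
    mul_ne_zero (mul_ne_zero two_ne_zero Complex.I_ne_zero) (by exact_mod_cast hs)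
  ext i
  rw [waveMomentum_apply, blochSystem_mulVec, Sum.elim_inl, Sum.elim_inr, Pi.sub_apply,
    Pi.smul_apply, smul_eq_mul, wavePosition_apply]
  linear_combination (Q x *ᵥ wavePosition ι v) i * mul_inv_cancel₀ his +
    (s : ℂ) ^ 2 * (v (.inl i) + v (.inr i)) * Complex.I_sq

theorem hasDerivAt_fundamentalSolution_mulVec {κ : Type*} [Fintype κ] [DecidableEq κ]
    {E : ℝ → Matrix κ κ ℂ} (hE : Continuous E) (w : κ → ℂ) (x : ℝ) :
    HasDerivAt (fun x => fundamentalSolution E x *ᵥ w) (E x *ᵥ fundamentalSolution E x *ᵥ w) x := by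
  rw [Matrix.mulVec_mulVec]
  exact ((Matrix.mulVecBilin ℝ ℝ).flip w).toContinuousLinearMap.hasFDerivAt.comp_hasDerivAt x
    (hasDerivAt_fundamentalSolution hE x)

theorem isBlochEigenvalue_of_det_eq_zero {m : ℕ} {Q : ℝ → Matrix (Fin m) (Fin m) ℂ}
    (hQ : Continuous Q) (hper : Function.Periodic Q Real.pi) {s : ℝ} (hs : s ≠ 0) {t : ℝ}
    (hdet : (monodromy Q s - blochPhase t • 1).det = 0) :
    IsBlochEigenvalue Q t ((s : ℂ) ^ 2) := by
  obtain ⟨w, hw₀, hw⟩ := Matrix.exists_mulVec_eq_zero_iff.mpr hdet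
  rw [Matrix.sub_mulVec, sub_eq_zero, Matrix.smul_mulVec, Matrix.one_mulVec] at hw
  have hF := continuous_blochSystem hQ s
  let y : ℝ → Fin m ⊕ Fin m → ℂ := fun x => fundamentalSolution (blochSystem Q s) x *ᵥ w
  let Ψ : ℝ → Fin m → ℂ := fun x => wavePosition (Fin m) (y x)
  have hy : ∀ x, HasDerivAt y (blochSystem Q s x *ᵥ y x) x :=
    hasDerivAt_fundamentalSolution_mulVec hF w
  have hy_period : ∀ x, y (x + Real.pi) = blochPhase t • y x := fun x => by
    simp only [y]
    rw [fundamentalSolution_add_period hF (periodic_blochSystem hper s), ← Matrix.mulVec_mulVec,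
      ← monodromy, hw, Matrix.mulVec_smul]
  have hΨ : ∀ x, HasDerivAt Ψ (waveMomentum (Fin m) s (y x)) x := fun x =>
    (((wavePosition (Fin m)).restrictScalars ℝ).hasFDerivAt.comp_hasDerivAt x (hy x)).congr_deriv
      (wavePosition_blochSystem_mulVec Q s x (y x))
  have hΨ' : ∀ x, HasDerivAt (fun x => waveMomentum (Fin m) s (y x))
      (Q x *ᵥ Ψ x - (s : ℂ) ^ 2 • Ψ x) x := fun x =>
    (((waveMomentum (Fin m) s).restrictScalars ℝ).hasFDerivAt.comp_hasDerivAt x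
      (hy x)).congr_deriv (waveMomentum_blochSystem_mulVec Q hs x (y x))
  have hΨ_cont : Continuous Ψ := continuous_iff_continuousAt.mpr fun x => (hΨ x).continuousAt
  have hderiv : deriv Ψ = fun x => waveMomentum (Fin m) s (y x) := funext fun x => (hΨ x).deriv
  refine ⟨Ψ, fun hzero => hw₀ ?_, contDiff_two_of_hasDerivAt hΨ hΨ' ?_, fun x => ?_, fun x => ?_⟩
  · have hmom : waveMomentum (Fin m) s (y 0) = 0 := by
      rw [← (hΨ 0).deriv, hzero]
      exact deriv_const 0 0
    simpa [y] using eq_zero_of_wavePosition_eq_zero_of_waveMomentum_eq_zero hs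
      (congrFun hzero 0) hmom
  · fun_prop
  · rw [hderiv, (hΨ' x).deriv, neg_sub, sub_add_cancel]
  · simp only [Ψ, hy_period, map_smul]

theorem sq_mem_SpecLQ_of_det_eq_zero {m : ℕ} {Q : ℝ → Matrix (Fin m) (Fin m) ℂ}
    (hQ : Continuous Q) (hper : Function.Periodic Q Real.pi) {s : ℝ} (hs : s ≠ 0) {φ : ℝ}
    (hdet : (monodromy Q s - Complex.exp (φ * Complex.I) • 1).det = 0) :
    (s : ℂ) ^ 2 ∈ SpecLQ Q := by
  obtain ⟨t, ht, htφ⟩ := exists_blochPhase_eq_exp φ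
  rw [← htφ] at hdet
  exact ⟨t, ht, isBlochEigenvalue_of_det_eq_zero hQ hper hs hdet⟩

end Monodromy

/-! ### High-energy asymptotics of the monodromy matrix -/

theorem tendsto_intervalIntegral_exp_smul {V : Type*} [NormedAddCommGroup V] [NormedSpace ℂ V]
    (f : ℝ → V) (a b : ℝ) :
    Tendsto (fun s : ℝ => ∫ x in a..b, Complex.exp (s * x * Complex.I) • f x)
      (cocompact ℝ) (𝓝 0) := by
  have hRL : ∀ S : Set ℝ, MeasurableSet S →
      Tendsto (fun s : ℝ => ∫ x in S, Complex.exp (s * x * Complex.I) • f x)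
        (cocompact ℝ) (𝓝 0) := by
    intro S hS
    have hscale : Tendsto (fun s : ℝ => s * (-(2 * Real.pi)⁻¹)) (cocompact ℝ) (cocompact ℝ) :=
      (Homeomorph.mulRight₀ (-(2 * Real.pi)⁻¹) (by simp [Real.pi_ne_zero])).isClosedEmbedding
        |>.tendsto_cocompact
    refine ((Real.tendsto_integral_exp_smul_cocompact (S.indicator f)).comp hscale).congr
      fun s => ?_
    rw [← integral_indicator hS]
    refine integral_congr_ae (.of_forall fun x => ?_)
    have hphase : (Real.fourierChar (-(x * (s * -(2 * Real.pi)⁻¹))) : ℂ) =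
        Complex.exp (s * x * Complex.I) := by
      have : (Real.pi : ℂ) ≠ 0 := by exact_mod_cast Real.pi_ne_zero
      rw [Real.fourierChar_apply]
      push_cast
      field_simp
    rw [indicator_smul_apply, ← hphase]
    rfl
  simpa only [intervalIntegral, sub_zero] using
    (hRL (Ioc a b) measurableSet_Ioc).sub (hRL (Ioc b a) measurableSet_Ioc)

section Asymptotics

attribute [local instance] Matrix.linftyOpNormedRing Matrix.linftyOpNormedAlgebra

variable {ι : Type*} [DecidableEq ι]

/-- The fundamental solution `diag (e^{isx}, e^{-isx})` of `blochSystem 0 s`. -/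
def freeWave (ι : Type*) [DecidableEq ι] (s x : ℝ) : Matrix (ι ⊕ ι) (ι ⊕ ι) ℂ :=
  scalarBlocks ι (Complex.exp (Complex.I * s * x)) (Complex.exp (-(Complex.I * s * x)))

theorem continuous_freeWave (s : ℝ) : Continuous (freeWave ι s) :=
  continuous_scalarBlocks.comp (by fun_prop : Continuous fun x : ℝ =>
    (Complex.exp (Complex.I * s * x), Complex.exp (-(Complex.I * s * x))))

variable [Fintype ι]

theorem norm_scalarBlocks_le_one {a b : ℂ} (ha : ‖a‖ ≤ 1) (hb : ‖b‖ ≤ 1) :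
    ‖scalarBlocks ι a b‖ ≤ 1 := by
  rw [scalarBlocks, Matrix.smul_one_eq_diagonal, Matrix.smul_one_eq_diagonal,
    Matrix.fromBlocks_diagonal, Matrix.linfty_opNorm_diagonal]
  refine (pi_norm_le_iff_of_nonneg zero_le_one).mpr ?_
  rintro (_ | _)
  exacts [ha, hb]

theorem intervalIntegral_matrix_apply {f : ℝ → Matrix ι ι ℂ} (hf : Continuous f) (a b : ℝ)
    (i j : ι) : (∫ x in a..b, f x) i j = ∫ x in a..b, f x i j :=
  ((Matrix.entryLinearMap ℝ ℂ i j).toContinuousLinearMap.intervalIntegral_comp_comm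
    (hf.intervalIntegrable a b)).symm

/-- The system satisfied by `freeWave⁻¹ Z` when `Z' = blochSystem Q s * Z`: the perturbation
term of `blochSystem` in the interaction picture. -/
def interactionSystem (Q : ℝ → Matrix ι ι ℂ) (s x : ℝ) : Matrix (ι ⊕ ι) (ι ⊕ ι) ℂ :=
  (2 * Complex.I * s)⁻¹ •
    (freeWave ι s (-x) * Matrix.fromBlocks (Q x) (Q x) (-Q x) (-Q x) * freeWave ι s x)

theorem freeWave_mul_freeWave_neg (s x : ℝ) : freeWave ι s x * freeWave ι s (-x) = 1 := by
  simp [freeWave, ← Complex.exp_add, scalarBlocks_one_one]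

theorem norm_freeWave_le_one (s x : ℝ) : ‖freeWave ι s x‖ ≤ 1 :=
  norm_scalarBlocks_le_one (by simp [Complex.norm_exp]) (by simp [Complex.norm_exp])

theorem hasDerivAt_freeWave (s x : ℝ) :
    HasDerivAt (freeWave ι s)
      (scalarBlocks ι (Complex.I * s) (-(Complex.I * s)) * freeWave ι s x) x := by
  have hsplit : ∀ a b : ℂ, scalarBlocks ι a b =
      a • scalarBlocks ι 1 0 + b • scalarBlocks ι 0 1 := fun a b => by
    simp [scalarBlocks, Matrix.fromBlocks_smul, Matrix.fromBlocks_add]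
  have hexp : ∀ c : ℂ, HasDerivAt (fun x : ℝ => Complex.exp (c * x)) (c * Complex.exp (c * x)) x :=
    fun c => by simpa [mul_comm] using ((hasDerivAt_id x).ofReal_comp.const_mul c).cexp
  have h := ((hexp (Complex.I * s)).smul_const (scalarBlocks ι 1 0)).add
    ((hexp (-(Complex.I * s))).smul_const (scalarBlocks ι 0 1))
  simp only [← hsplit, neg_mul] at h
  rw [freeWave, scalarBlocks_mul_scalarBlocks, neg_mul]
  exact h.congr_of_eventuallyEq (.of_forall fun y => hsplit _ _)

variable {Q : ℝ → Matrix ι ι ℂ}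

theorem continuous_interactionSystem (hQ : Continuous Q) (s : ℝ) :
    Continuous (interactionSystem Q s) := by
  have := continuous_freeWave (ι := ι) s
  unfold interactionSystem
  fun_prop

theorem fundamentalSolution_blochSystem (hQ : Continuous Q) (s x : ℝ) :
    fundamentalSolution (blochSystem Q s) x =
      freeWave ι s x * fundamentalSolution (interactionSystem Q s) x := by
  have hderiv : ∀ y, HasDerivAt
      (fun y => freeWave ι s y * fundamentalSolution (interactionSystem Q s) y)
      (blochSystem Q s y * (freeWave ι s y * fundamentalSolution (interactionSystem Q s) y)) y :=
    fun y => by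
      refine ((hasDerivAt_freeWave s y).mul
        (hasDerivAt_fundamentalSolution (continuous_interactionSystem hQ s) y)).congr_deriv ?_
      rw [interactionSystem, blochSystem, smul_mul_assoc, mul_smul_comm]
      simp only [← mul_assoc, freeWave_mul_freeWave_neg, one_mul, add_mul, smul_mul_assoc]
  have h := eq_fundamentalSolution_mul (continuous_blochSystem hQ s) hderiv x
  rw [fundamentalSolution_zero, mul_one] at h
  simpa [freeWave, scalarBlocks_one_one] using h.symm

theorem smul_interactionSystem {s : ℝ} (hs : s ≠ 0) (Q : ℝ → Matrix ι ι ℂ) (x : ℝ) :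
    (2 * Complex.I * s) • interactionSystem Q s x =
      Matrix.fromBlocks (Q x) 0 0 (-Q x) +
        Complex.exp ((-(2 * s) : ℝ) * x * Complex.I) • Matrix.fromBlocks 0 (Q x) 0 0 +
        Complex.exp ((2 * s : ℝ) * x * Complex.I) • Matrix.fromBlocks 0 0 (-Q x) 0 := by
  have his : 2 * Complex.I * s ≠ 0 :=
    mul_ne_zero (mul_ne_zero two_ne_zero Complex.I_ne_zero) (by exact_mod_cast hs)
  rw [interactionSystem, smul_inv_smul₀ his, freeWave, freeWave, scalarBlocks_mul_fromBlocks,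
    fromBlocks_mul_scalarBlocks]
  have hcancel (c : ℂ) : Complex.exp (-c) * Complex.exp c = 1 := by
    rw [← Complex.exp_add, neg_add_cancel, Complex.exp_zero]
  have hsq (c : ℂ) : Complex.exp c * Complex.exp c = Complex.exp (2 * c) := by
    rw [← Complex.exp_add, two_mul]
  have hcancel' (c : ℂ) : Complex.exp c * Complex.exp (-c) = 1 := by rw [mul_comm, hcancel]
  simp only [Matrix.fromBlocks_smul, Matrix.fromBlocks_add, smul_smul]
  push_cast
  congr 1 <;> simp [hsq, hcancel, hcancel'] <;> ring_nf

theorem intervalIntegral_fromBlocks_diagonal {f g : ℝ → Matrix ι ι ℂ} (hf : Continuous f)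
    (hg : Continuous g) (a b : ℝ) :
    ∫ x in a..b, Matrix.fromBlocks (f x) 0 0 (g x) =
      Matrix.fromBlocks (∫ x in a..b, f x) 0 0 (∫ x in a..b, g x) := by
  ext i j
  rw [intervalIntegral_matrix_apply (by fun_prop)]
  rcases i with i | i <;> rcases j with j | j <;>
    simp [intervalIntegral_matrix_apply, hf, hg]

theorem tendsto_integral_smul_interactionSystem (hQ : Continuous Q) :
    Tendsto (fun s : ℝ => ∫ x in (0 : ℝ)..Real.pi, (2 * Complex.I * s) • interactionSystem Q s x)
      atTop (𝓝 (Matrix.fromBlocks (∫ x in (0 : ℝ)..Real.pi, Q x) 0 0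
        (-∫ x in (0 : ℝ)..Real.pi, Q x))) := by
  have hmean : ∫ x in (0 : ℝ)..Real.pi, Matrix.fromBlocks (Q x) 0 0 (-Q x) =
      Matrix.fromBlocks (∫ x in (0 : ℝ)..Real.pi, Q x) 0 0 (-∫ x in (0 : ℝ)..Real.pi, Q x) := by
    rw [intervalIntegral_fromBlocks_diagonal (g := fun x => -Q x) hQ (by fun_prop),
      intervalIntegral.integral_neg]
  have htwo : Tendsto (fun s : ℝ => 2 * s) atTop atTop :=
    tendsto_id.const_mul_atTop two_pos
  have hplus := (tendsto_intervalIntegral_exp_smul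
    (fun x => (Matrix.fromBlocks 0 0 (-Q x) 0 : Matrix (ι ⊕ ι) (ι ⊕ ι) ℂ)) 0 Real.pi).comp
      (htwo.mono_right atTop_le_cocompact)
  have hminus := (tendsto_intervalIntegral_exp_smul
    (fun x => (Matrix.fromBlocks 0 (Q x) 0 0 : Matrix (ι ⊕ ι) (ι ⊕ ι) ℂ)) 0 Real.pi).comp
      ((tendsto_neg_atTop_atBot.comp htwo).mono_right atBot_le_cocompact)
  have hlim := (hminus.const_add (∫ x in (0 : ℝ)..Real.pi,
    Matrix.fromBlocks (Q x) 0 0 (-Q x))).add hplus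
  rw [hmean, add_zero, add_zero] at hlim
  refine hlim.congr' ?_
  filter_upwards [eventually_ne_atTop 0] with s hs
  simp only [smul_interactionSystem hs]
  rw [intervalIntegral.integral_add, intervalIntegral.integral_add, hmean]
  · rfl
  all_goals exact Continuous.intervalIntegrable (by fun_prop) _ _

theorem norm_interactionSystem_le {K : ℝ} {s x : ℝ} (hs : 0 < s)
    (hK : ‖Matrix.fromBlocks (Q x) (Q x) (-Q x) (-Q x)‖ ≤ K) :
    ‖interactionSystem Q s x‖ ≤ K / (2 * s) := by
  have hK0 : 0 ≤ K := (norm_nonneg _).trans hK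
  have hnorm : ‖(2 * Complex.I * s)⁻¹‖ = (2 * s)⁻¹ := by simp [abs_of_pos hs]
  rw [interactionSystem, norm_smul, hnorm, div_eq_inv_mul]
  gcongr
  calc _ ≤ ‖freeWave ι s (-x)‖ * ‖Matrix.fromBlocks (Q x) (Q x) (-Q x) (-Q x)‖ *
        ‖freeWave ι s x‖ := norm_mul₃_le
    _ ≤ 1 * K * 1 := by gcongr <;> exact norm_freeWave_le_one _ _
    _ = K := by ring

theorem tendsto_smul_fundamentalSolution_interactionSystem_sub_one (hQ : Continuous Q) :
    Tendsto (fun s : ℝ =>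
        (2 * Complex.I * s) • (fundamentalSolution (interactionSystem Q s) Real.pi - 1))
      atTop (𝓝 (Matrix.fromBlocks (∫ x in (0 : ℝ)..Real.pi, Q x) 0 0
        (-∫ x in (0 : ℝ)..Real.pi, Q x))) := by
  obtain ⟨K, hK⟩ := exists_norm_le_of_abs_le
    (f := fun x => Matrix.fromBlocks (Q x) (Q x) (-Q x) (-Q x)) (by fun_prop) Real.pi
  set C := ‖(1 : Matrix (ι ⊕ ι) (ι ⊕ ι) ℂ)‖
  have hsmall : Tendsto (fun s : ℝ => K * Real.pi / (2 * s)) atTop (𝓝 0) :=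
    tendsto_const_nhds.div_atTop (tendsto_id.const_mul_atTop two_pos)
  have hbound : Tendsto (fun s : ℝ => K * Real.pi * C *
      (K * Real.pi / (2 * s) * Real.exp (K * Real.pi / (2 * s)))) atTop (𝓝 0) := by
    simpa using (hsmall.mul hsmall.rexp).const_mul (K * Real.pi * C)
  rw [← sub_zero (Matrix.fromBlocks _ _ _ _)]
  refine ((tendsto_integral_smul_interactionSystem hQ).sub
    (squeeze_zero_norm' ?_ hbound)).congr fun s => sub_sub_cancel _ _
  filter_upwards [eventually_gt_atTop 0] with s hs
  have hsnorm : ‖2 * Complex.I * s‖ = 2 * s := by simp [abs_of_pos hs]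
  rw [intervalIntegral.integral_smul, ← smul_sub, norm_smul, norm_sub_rev, hsnorm]
  calc _ ≤ 2 * s * (C * ((K / (2 * s) * |Real.pi|) ^ 2 * Real.exp (K / (2 * s) * |Real.pi|))) := by
        gcongr
        exact norm_fundamentalSolution_sub_le (continuous_interactionSystem hQ s)
          (fun x hx => norm_interactionSystem_le hs (hK x hx)) (abs_of_pos Real.pi_pos).le
    _ = _ := by
        rw [abs_of_pos Real.pi_pos, div_mul_eq_mul_div]
        field_simp

end Asymptotics

/-! ### The limiting characteristic determinant -/

section LimitDet

variable {ι : Type*} [Fintype ι] [DecidableEq ι]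

theorem det_scalarBlocks (a b : ℂ) : (scalarBlocks ι a b).det = (a * b) ^ Fintype.card ι := by
  simp [scalarBlocks, Matrix.det_fromBlocks_zero₂₁, mul_pow]

/-- Multiplication by `scalarBlocks ι (c * (a / b)) (c * (r * a))` cancels the phases of
`scalarBlocks ι b b⁻¹` and rescales the two diagonal blocks. -/
theorem mul_det_scalarBlocks_mul_sub (T : Matrix (ι ⊕ ι) (ι ⊕ ι) ℂ) {a b : ℂ} (ha : a ≠ 0)
    (hb : b ≠ 0) (c r : ℂ) :
    (c ^ 2 * r * (a ^ 2 / b)) ^ Fintype.card ι *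
        (scalarBlocks ι b b⁻¹ * T - (b / a ^ 2) • (1 : Matrix (ι ⊕ ι) (ι ⊕ ι) ℂ)).det =
      (scalarBlocks ι a (r * (a / b)) * (c • (T - 1)) +
        scalarBlocks ι (c * (a - a⁻¹)) (r * (c * (a / b - b / a)))).det := by
  set L := scalarBlocks ι (c * (a / b)) (c * (r * a))
  have hdet : L.det = (c ^ 2 * r * (a ^ 2 / b)) ^ Fintype.card ι := by
    rw [det_scalarBlocks]
    ring
  have hL : L * scalarBlocks ι b b⁻¹ = c • scalarBlocks ι a (r * (a / b)) := by
    rw [scalarBlocks_mul_scalarBlocks, scalarBlocks, scalarBlocks, Matrix.fromBlocks_smul]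
    simp only [smul_zero, smul_smul]
    congr 2 <;> field_simp
  have hLz : L * scalarBlocks ι (b - b / a ^ 2) (b⁻¹ - b / a ^ 2) =
      scalarBlocks ι (c * (a - a⁻¹)) (r * (c * (a / b - b / a))) := by
    rw [scalarBlocks_mul_scalarBlocks]
    congr 1 <;> field_simp
  have hsub : scalarBlocks ι b b⁻¹ - (b / a ^ 2) • (1 : Matrix (ι ⊕ ι) (ι ⊕ ι) ℂ) =
      scalarBlocks ι (b - b / a ^ 2) (b⁻¹ - b / a ^ 2) := by
    rw [smul_one_eq_scalarBlocks]
    simp [scalarBlocks, sub_eq_add_neg, Matrix.fromBlocks_neg, Matrix.fromBlocks_add, add_smul]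
  rw [← hdet, ← Matrix.det_mul, mul_smul_comm, ← smul_mul_assoc, ← hL, ← hLz, ← hsub]
  congr 1
  noncomm_ring

theorem mul_phaseDet_scalarBlocks_mul (T : Matrix (ι ⊕ ι) (ι ⊕ ι) ℂ) (s r α β : ℝ) :
    ((-(4 * s ^ 2 * r)) ^ Fintype.card ι : ℝ) * phaseDet
      (scalarBlocks ι (Complex.exp (β * Complex.I)) (Complex.exp (-(β * Complex.I))) * T)
      (β - 2 * α) =
    (scalarBlocks ι (Complex.exp (α * Complex.I)) (r * Complex.exp ((α - β : ℝ) * Complex.I)) *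
        ((2 * Complex.I * s) • (T - 1)) +
      scalarBlocks ι (-(4 * s * Real.sin α) : ℝ) (r * (-(4 * s * Real.sin (α - β)) : ℝ))).det := by
  have hz : Complex.exp ((β - 2 * α : ℝ) * Complex.I) =
      Complex.exp (β * Complex.I) / Complex.exp (α * Complex.I) ^ 2 := by
    rw [← Complex.exp_nat_mul, ← Complex.exp_sub]
    push_cast
    ring_nf
  have hαβ : Complex.exp ((α - β : ℝ) * Complex.I) =
      Complex.exp (α * Complex.I) / Complex.exp (β * Complex.I) := by
    rw [← Complex.exp_sub, ← sub_mul, Complex.ofReal_sub]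
  have hsin (x : ℝ) : (-(4 * s * Real.sin x) : ℝ) = 2 * Complex.I * s *
      (Complex.exp (x * Complex.I) - (Complex.exp (x * Complex.I))⁻¹) := by
    have htwo := Complex.two_sin x
    rw [neg_mul, Complex.exp_neg] at htwo
    push_cast
    linear_combination (-2 * s : ℂ) * htwo
  have hcard : -((β - 2 * α : ℝ) * Complex.I * (Fintype.card (ι ⊕ ι) / 2)) =
      Fintype.card ι * (-((β - 2 * α : ℝ) * Complex.I)) := by
    rw [Fintype.card_sum]
    push_cast
    ring
  rw [hsin, hsin, hαβ, inv_div, ← mul_det_scalarBlocks_mul_sub T (Complex.exp_ne_zero _)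
    (Complex.exp_ne_zero _), phaseDet, hcard, Complex.exp_nat_mul, Complex.exp_neg, hz, inv_div,
    ← mul_assoc, Complex.ofReal_pow, ← mul_pow, Complex.exp_neg]
  congr 2
  push_cast
  linear_combination Complex.I_sq *
    (-4 * s ^ 2 * r * Complex.exp (α * Complex.I) ^ 2 / Complex.exp (β * Complex.I))

/-- The complex number `cos πs + 4is sin πs`, whose direction measures on the relevant scale how
close `s` is to an integer, where the two free waves `e^{±isx}` are in resonance. -/
def resonanceNumber (s : ℝ) : ℂ := ⟨Real.cos (Real.pi * s), 4 * s * Real.sin (Real.pi * s)⟩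

/-- The direction of `resonanceNumber s`. -/
def resonanceDirection (s : ℝ) : ℂ := ‖resonanceNumber s‖⁻¹ • resonanceNumber s

theorem norm_resonanceDirection {s : ℝ} (hs : s ≠ 0) : ‖resonanceDirection s‖ = 1 := by
  refine norm_smul_inv_norm fun h => ?_
  have hcos : Real.cos (Real.pi * s) = 0 := congrArg Complex.re h
  have hsin : 4 * s * Real.sin (Real.pi * s) = 0 := congrArg Complex.im h
  have := Real.sin_sq_add_cos_sq (Real.pi * s)
  simp_all

/-- The limit of the rescaled characteristic determinants of `monodromy Q s` at the phases
`πs - κ / (2s)`, as `resonanceDirection s` tends to `q + ip` and with `A` the mean of `Q`. -/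
def limitDet {R : Type*} [CommRing R] (A : Matrix ι ι R) (q p κ : R) : R :=
  (A - κ • (1 : Matrix ι ι R)).det * ((p - q * κ) • (1 : Matrix ι ι R) - q • A).det

theorem limitDet_eq_det (A : Matrix ι ι ℂ) (q p κ : ℂ) :
    limitDet A q p κ = (scalarBlocks ι 1 q * Matrix.fromBlocks A 0 0 (-A) +
      scalarBlocks ι (-κ) (p - q * κ)).det := by
  rw [scalarBlocks_mul_fromBlocks, scalarBlocks, Matrix.fromBlocks_add]
  simp only [smul_zero, add_zero, Matrix.det_fromBlocks_zero₂₁, limitDet]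
  congr 2
  · module
  · module

attribute [local instance] Matrix.linftyOpNormedRing Matrix.linftyOpNormedAlgebra

variable {Q : ℝ → Matrix ι ι ℂ} {l : Filter ℝ}

theorem tendsto_const_div_four_mul (hl : l ≤ atTop) (κ : ℝ) :
    Tendsto (fun s : ℝ => κ / (4 * s)) l (𝓝 0) :=
  (tendsto_const_nhds.div_atTop (tendsto_id.const_mul_atTop four_pos)).mono_left hl

theorem tendsto_four_mul_sin_div (hl : l ≤ atTop) (κ : ℝ) :
    Tendsto (fun s : ℝ => 4 * s * Real.sin (κ / (4 * s))) l (𝓝 κ) := by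
  have hsinc (x : ℝ) : Real.sin x = x * Real.sinc x := by
    rcases eq_or_ne x 0 with rfl | hx
    · simp
    · rw [Real.sinc_of_ne_zero hx, mul_div_cancel₀ _ hx]
  have hlim := ((Real.continuous_sinc.tendsto 0).comp
    (tendsto_const_div_four_mul hl κ)).const_mul κ
  rw [Real.sinc_zero, mul_one] at hlim
  refine hlim.congr' ?_
  filter_upwards [hl (eventually_ne_atTop 0)] with s hs
  rw [hsinc, Function.comp_apply]
  field_simp

section Direction

variable {u : ℂ} (hl : l ≤ atTop) (hu : Tendsto resonanceDirection l (𝓝 u)) (κ : ℝ)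

include hl hu

theorem tendsto_inv_norm_mul_exp :
    Tendsto (fun s : ℝ => (‖resonanceNumber s‖⁻¹ : ℂ) *
      Complex.exp ((κ / (4 * s) - Real.pi * s : ℝ) * Complex.I)) l (𝓝 u.re) := by
  have hre : Tendsto (fun s => (resonanceDirection s).re) l (𝓝 u.re) :=
    (Complex.continuous_re.tendsto u).comp hu
  have him : Tendsto (fun s => (resonanceDirection s).im / (4 * s)) l (𝓝 0) :=
    ((Complex.continuous_im.tendsto u).comp hu).div_atTop
      ((tendsto_id.const_mul_atTop four_pos).mono_left hl)
  have hexp := (tendsto_const_div_four_mul hl κ).ofReal.mul_const Complex.I |>.cexp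
  have hlim := hexp.mul (hre.ofReal.sub (him.ofReal.mul_const Complex.I))
  simp only [Complex.ofReal_zero, zero_mul, Complex.exp_zero, one_mul, sub_zero] at hlim
  refine hlim.congr' ?_
  filter_upwards [hl (eventually_ne_atTop 0)] with s hs
  have hsin : (resonanceDirection s).im / (4 * s) =
      ‖resonanceNumber s‖⁻¹ * Real.sin (Real.pi * s) := by
    simp only [resonanceDirection, resonanceNumber, Complex.smul_im, smul_eq_mul]
    field_simp
  have hphase : Complex.exp (-(Real.pi * s : ℝ) * Complex.I) =
      Real.cos (Real.pi * s) - Real.sin (Real.pi * s) * Complex.I := by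
    rw [← Complex.ofReal_neg, Complex.exp_ofReal_mul_I, Real.cos_neg, Real.sin_neg]
    push_cast
    ring
  rw [hsin, Complex.ofReal_sub, sub_eq_add_neg (_ : ℂ) ((Real.pi * s : ℝ) : ℂ), add_mul,
    Complex.exp_add, hphase, resonanceDirection, Complex.smul_re, smul_eq_mul, resonanceNumber]
  push_cast
  ring

theorem tendsto_inv_norm_mul_sin_sub :
    Tendsto (fun s : ℝ => ‖resonanceNumber s‖⁻¹ *
      (-(4 * s * Real.sin (κ / (4 * s) - Real.pi * s)))) l (𝓝 (u.im - u.re * κ)) := by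
  have hre : Tendsto (fun s => (resonanceDirection s).re) l (𝓝 u.re) :=
    (Complex.continuous_re.tendsto u).comp hu
  have him : Tendsto (fun s => (resonanceDirection s).im) l (𝓝 u.im) :=
    (Complex.continuous_im.tendsto u).comp hu
  have hcos := (Real.continuous_cos.tendsto 0).comp (tendsto_const_div_four_mul hl κ)
  have hlim := (him.mul hcos).sub (hre.mul (tendsto_four_mul_sin_div hl κ))
  rw [Real.cos_zero, mul_one] at hlim
  refine hlim.congr fun s => ?_
  simp only [resonanceDirection, resonanceNumber, Complex.smul_im, Complex.smul_re, smul_eq_mul,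
    Function.comp_apply, Real.sin_sub]
  ring

theorem tendsto_mul_phaseDet_monodromy (hQ : Continuous Q) :
    Tendsto (fun s : ℝ => ((-(4 * s ^ 2 * ‖resonanceNumber s‖⁻¹)) ^ Fintype.card ι : ℝ) *
        phaseDet (monodromy Q s) (Real.pi * s - 2 * (κ / (4 * s)))) l
      (𝓝 (limitDet (∫ x in (0 : ℝ)..Real.pi, Q x) (u.re : ℂ) u.im κ)) := by
  set A := ∫ x in (0 : ℝ)..Real.pi, Q x
  have hexp := (tendsto_const_div_four_mul hl κ).ofReal.mul_const Complex.I |>.cexp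
  have hdiag := (continuous_scalarBlocks (ι := ι)).tendsto _ |>.comp
    (hexp.prodMk_nhds (tendsto_inv_norm_mul_exp hl hu κ))
  have hres := (continuous_scalarBlocks (ι := ι)).tendsto _ |>.comp
    ((tendsto_four_mul_sin_div hl κ).neg.ofReal.prodMk_nhds
      (tendsto_inv_norm_mul_sin_sub hl hu κ).ofReal)
  have hlim := (continuous_id.matrix_det.tendsto _).comp ((hdiag.mul
    ((tendsto_smul_fundamentalSolution_interactionSystem_sub_one hQ).mono_left hl)).add hres)
  rw [limitDet_eq_det]
  simp only [Complex.ofReal_zero, zero_mul, Complex.exp_zero, Complex.ofReal_neg,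
    Complex.ofReal_sub, Complex.ofReal_mul, id] at hlim
  refine hlim.congr fun s => ?_
  have hM : monodromy Q s = scalarBlocks ι (Complex.exp ((Real.pi * s : ℝ) * Complex.I))
      (Complex.exp (-((Real.pi * s : ℝ) * Complex.I))) *
        fundamentalSolution (interactionSystem Q s) Real.pi := by
    rw [monodromy, fundamentalSolution_blochSystem hQ, freeWave]
    push_cast
    ring_nf
  rw [hM, mul_phaseDet_scalarBlocks_mul]
  simp [-one_div]

end Direction

end LimitDet

/-! ### Sign changes of the limiting determinant -/

theorem eventually_eval_sub_mul_eval_add_neg {f : Polynomial ℝ} (hf : f ≠ 0) {μ : ℝ}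
    (hodd : Odd (f.rootMultiplicity μ)) :
    ∀ᶠ η in 𝓝[>] 0, f.eval (μ - η) * f.eval (μ + η) < 0 := by
  obtain ⟨w, hw, hnd⟩ := Polynomial.exists_eq_pow_rootMultiplicity_mul_and_not_dvd f hf μ
  set r := f.rootMultiplicity μ
  have hwμ : w.eval μ ≠ 0 := fun h => hnd (Polynomial.dvd_iff_isRoot.mpr h)
  have hcont : Tendsto (fun η => w.eval (μ - η) * w.eval (μ + η)) (𝓝 0)
      (𝓝 (w.eval μ * w.eval μ)) :=
    Continuous.tendsto' (by fun_prop) _ _ (by simp)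
  filter_upwards [nhdsWithin_le_nhds (hcont.eventually_const_lt (mul_self_pos.mpr hwμ)),
    self_mem_nhdsWithin] with η hpos (hη : 0 < η)
  have hfactor : f.eval (μ - η) * f.eval (μ + η) =
      -(η ^ r * η ^ r * (w.eval (μ - η) * w.eval (μ + η))) := by
    rw [hw]
    simp only [Polynomial.eval_mul, Polynomial.eval_pow, Polynomial.eval_sub, Polynomial.eval_X,
      Polynomial.eval_C, sub_sub_cancel_left, add_sub_cancel_left, hodd.neg_pow]
    ring
  rw [hfactor, neg_lt_zero]
  positivity

theorem conj_intervalIntegral_of_conj_neg {f : ℝ → ℂ} {T : ℝ} (hper : Function.Periodic f T)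
    (hf : ∀ x, starRingEnd ℂ (f (-x)) = f x) :
    starRingEnd ℂ (∫ x in (0 : ℝ)..T, f x) = ∫ x in (0 : ℝ)..T, f x := by
  calc starRingEnd ℂ (∫ x in (0 : ℝ)..T, f x)
      = starRingEnd ℂ (∫ x in (-T)..0, f x) := by
        simpa using congrArg (starRingEnd ℂ) (hper.intervalIntegral_add_eq 0 (-T))
    _ = ∫ x in (-T)..0, starRingEnd ℂ (f x) := by
        simp only [intervalIntegral, map_sub, integral_conj]
    _ = ∫ x in (0 : ℝ)..T, starRingEnd ℂ (f (-x)) := by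
        simp [intervalIntegral.integral_comp_neg (fun x => starRingEnd ℂ (f x))]
    _ = ∫ x in (0 : ℝ)..T, f x := by simp only [hf]

section Signs

variable {ι : Type*} [Fintype ι] [DecidableEq ι]

theorem det_sub_smul_one {R : Type*} [CommRing R] (B : Matrix ι ι R) (κ : R) :
    (B - κ • (1 : Matrix ι ι R)).det = (-1) ^ Fintype.card ι * B.charpoly.eval κ := by
  rw [Matrix.eval_charpoly, ← Matrix.det_neg, neg_sub, Matrix.scalar_apply,
    Matrix.smul_one_eq_diagonal]

theorem det_smul_one_sub_smul {K : Type*} [Field K] (B : Matrix ι ι K) {p q : K} (hq : q ≠ 0)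
    (κ : K) : ((p - q * κ) • (1 : Matrix ι ι K) - q • B).det =
      q ^ Fintype.card ι * B.charpoly.eval (p / q - κ) := by
  rw [Matrix.eval_charpoly, ← Matrix.det_smul, Matrix.scalar_apply,
    ← Matrix.smul_one_eq_diagonal, smul_sub, smul_smul, mul_sub, mul_div_cancel₀ _ hq]

theorem map_limitDet {R S : Type*} [CommRing R] [CommRing S] (f : R →+* S) (A : Matrix ι ι R)
    (q p κ : R) : f (limitDet A q p κ) = limitDet (A.map f) (f q) (f p) (f κ) := by
  simp only [limitDet, map_mul, RingHom.map_det, RingHom.mapMatrix_apply]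
  congr 2 <;> ext i j <;> simp [Matrix.one_apply, apply_ite f]

/-- The first factor of `limitDet` changes sign between `κ₁` and `κ₂`, so the second one does
too unless the product does. -/
theorem exists_isRoot_of_limitDet_mul_nonneg (B : Matrix ι ι ℝ) {q p κ₁ κ₂ : ℝ}
    (hpq : q = 0 → p ≠ 0) (hsign : B.charpoly.eval κ₁ * B.charpoly.eval κ₂ < 0)
    (h : 0 ≤ limitDet B q p κ₁ * limitDet B q p κ₂) :
    q ≠ 0 ∧ ∃ κ ∈ uIcc κ₁ κ₂, B.charpoly.IsRoot (p / q - κ) := by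
  set g : ℝ → ℝ := fun κ => ((p - q * κ) • (1 : Matrix ι ι ℝ) - q • B).det
  have hg : Continuous g := by fun_prop
  have hprod : g κ₁ * g κ₂ ≤ 0 := by
    have hneg : ((-1 : ℝ) ^ Fintype.card ι) * (-1) ^ Fintype.card ι = 1 := by
      rw [← mul_pow, neg_mul_neg, one_mul, one_pow]
    have hexpand : limitDet B q p κ₁ * limitDet B q p κ₂ =
        B.charpoly.eval κ₁ * B.charpoly.eval κ₂ * (g κ₁ * g κ₂) := by
      simp only [limitDet, det_sub_smul_one, g]
      linear_combination (B.charpoly.eval κ₁ * B.charpoly.eval κ₂ * (g κ₁ * g κ₂)) * hneg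
    rw [hexpand] at h
    exact nonpos_of_mul_nonneg_right h hsign
  have hzero : (0 : ℝ) ∈ uIcc (g κ₁) (g κ₂) := by
    rw [mem_uIcc]
    exact (mul_nonpos_iff.mp hprod).elim (fun h => .inr h.symm) .inl
  obtain ⟨κ, hκ, hgκ⟩ := intermediate_value_uIcc hg.continuousOn hzero
  have hq : q ≠ 0 := by
    rintro rfl
    simp [g, hpq rfl] at hgκ
  refine ⟨hq, κ, hκ, ?_⟩
  simpa [g, det_smul_one_sub_smul B hq, hq] using hgκ

attribute [local instance] Matrix.linftyOpNormedRing Matrix.linftyOpNormedAlgebra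

theorem exists_intervalIntegral_eq_map_ofReal {Q : ℝ → Matrix ι ι ℂ} (hQ : Continuous Q)
    {T : ℝ} (hper : Function.Periodic Q T) (hPT : ∀ x, (Q (-x)).map (starRingEnd ℂ) = Q x) :
    ∃ B : Matrix ι ι ℝ, ∫ x in (0 : ℝ)..T, Q x = B.map Complex.ofRealHom := by
  refine ⟨(∫ x in (0 : ℝ)..T, Q x).map Complex.re, ?_⟩
  ext i j
  rw [Matrix.map_apply, Matrix.map_apply, intervalIntegral_matrix_apply hQ]
  have hconj := conj_intervalIntegral_of_conj_neg (f := fun x => Q x i j)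
    (fun x => congrFun₂ (hper x) i j) fun x => congrFun₂ (hPT x) i j
  exact (Complex.conj_eq_iff_re.mp hconj).symm

end Signs

/-! ### Resonances -/

theorem pi_mul_sub_round_eq_arctan {s : ℝ} (hs : Real.cos (Real.pi * s) ≠ 0) :
    Real.pi * (s - round s) = Real.arctan (Real.tan (Real.pi * s)) := by
  have hsub : Real.pi * (s - round s) = Real.pi * s - round s * Real.pi := by ring
  have hcos : Real.cos (Real.pi * (s - round s)) ≠ 0 := by
    rw [hsub, Real.cos_sub_int_mul_pi]
    exact mul_ne_zero (zpow_ne_zero _ (by norm_num)) hs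
  have habs : |Real.pi * (s - round s)| ≤ Real.pi / 2 := by
    rw [abs_mul, abs_of_pos Real.pi_pos]
    linarith [mul_le_mul_of_nonneg_left (abs_sub_round s) Real.pi_pos.le]
  have hlt : |Real.pi * (s - round s)| < Real.pi / 2 := by
    refine habs.lt_of_ne fun h => hcos ?_
    rw [← Real.cos_abs, h, Real.cos_pi_div_two]
  rw [← Real.tan_sub_int_mul_pi _ (round s), ← hsub,
    Real.arctan_tan (neg_lt_of_abs_lt hlt) (lt_of_abs_lt hlt)]

theorem tendsto_zero_of_tendsto_mul {l : Filter ℝ} {f : ℝ → ℝ} {c : ℝ} (hl : l ≤ atTop)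
    (hf : Tendsto (fun s => s * f s) l (𝓝 c)) : Tendsto f l (𝓝 0) := by
  refine (hf.div_atTop (tendsto_id.mono_left hl)).congr' ?_
  filter_upwards [hl (eventually_ne_atTop 0)] with s hs
  exact mul_div_cancel_left₀ _ hs

theorem tendsto_mul_arctan_of_tendsto_mul {l : Filter ℝ} {f : ℝ → ℝ} {c : ℝ} (hl : l ≤ atTop)
    (hf : Tendsto (fun s => s * f s) l (𝓝 c)) :
    Tendsto (fun s => s * Real.arctan (f s)) l (𝓝 c) := by
  have hslope : Tendsto (dslope Real.arctan 0) (𝓝 0) (𝓝 1) := by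
    have hcont := continuousAt_dslope_same.mpr (Real.differentiable_arctan 0)
    simpa [ContinuousAt, dslope_same, Real.deriv_arctan] using hcont
  have hlim := hf.mul (hslope.comp (tendsto_zero_of_tendsto_mul hl hf))
  rw [mul_one] at hlim
  refine hlim.congr fun s => ?_
  have h := sub_smul_dslope Real.arctan 0 (f s)
  rw [sub_zero, smul_eq_mul, Real.arctan_zero, sub_zero] at h
  rw [Function.comp_apply, mul_assoc, h]

theorem tendsto_sq_sub_round_sq {l : Filter ℝ} {u : ℂ} (hl : l ≤ atTop)
    (hu : Tendsto resonanceDirection l (𝓝 u)) (hre : u.re ≠ 0) :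
    Tendsto (fun s : ℝ => s ^ 2 - (round s : ℝ) ^ 2) l (𝓝 (u.im / u.re / (2 * Real.pi))) := by
  have hlimre := (Complex.continuous_re.tendsto u).comp hu
  have hlimim := (Complex.continuous_im.tendsto u).comp hu
  have hne : ∀ᶠ s in l, ‖resonanceNumber s‖⁻¹ ≠ 0 ∧ Real.cos (Real.pi * s) ≠ 0 :=
    (hlimre.eventually_ne hre).mono fun s hs => by
      simpa [resonanceDirection, Complex.smul_re, resonanceNumber] using hs
  have htan : Tendsto (fun s => s * Real.tan (Real.pi * s)) l (𝓝 (u.im / u.re / 4)) := by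
    refine ((hlimim.div hlimre hre).div_const 4).congr' ?_
    filter_upwards [hne] with s ⟨hnorm, _⟩
    simp only [Pi.div_apply, Function.comp_apply, resonanceDirection, Complex.smul_re,
      Complex.smul_im, smul_eq_mul, Real.tan_eq_sin_div_cos, mul_div_mul_left _ _ hnorm]
    rw [resonanceNumber]
    ring
  have hdist : Tendsto (fun s : ℝ => s * (s - round s)) l (𝓝 (u.im / u.re / 4 / Real.pi)) := by
    refine ((tendsto_mul_arctan_of_tendsto_mul hl htan).div_const Real.pi).congr' ?_
    filter_upwards [hne] with s ⟨_, hcos⟩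
    rw [← pi_mul_sub_round_eq_arctan hcos, mul_left_comm, mul_div_cancel_left₀ _ Real.pi_ne_zero]
  have hlim := (hdist.const_mul 2).sub ((tendsto_zero_of_tendsto_mul hl hdist).pow 2)
  convert hlim using 2
  · ring
  · field_simp
    ring

/-! ### The spectrum away from the resonances -/

section Spectrum

attribute [local instance] Matrix.linftyOpNormedRing Matrix.linftyOpNormedAlgebra

variable {m : ℕ} {Q : ℝ → Matrix (Fin m) (Fin m) ℂ} {B : Matrix (Fin m) (Fin m) ℝ}
  (hQ : Continuous Q) (hper : Function.Periodic Q Real.pi)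
  (hPT : ∀ x, (Q (-x)).map (starRingEnd ℂ) = Q x)
  (hB : ∫ x in (0 : ℝ)..Real.pi, Q x = B.map Complex.ofRealHom)

include hQ hper hPT hB

theorem eventually_sq_mem_SpecLQ_of_limitDet_mul_neg {l : Filter ℝ} (hl : l ≤ atTop) {u : ℂ}
    (hu : Tendsto resonanceDirection l (𝓝 u)) {κ₁ κ₂ : ℝ}
    (h : limitDet B u.re u.im κ₁ * limitDet B u.re u.im κ₂ < 0) :
    ∀ᶠ s : ℝ in l, (s : ℂ) ^ 2 ∈ SpecLQ Q := by
  have hlim (κ : ℝ) := tendsto_mul_phaseDet_monodromy hl hu κ hQ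
  simp only [hB, ← Complex.ofRealHom_eq_coe, ← map_limitDet] at hlim
  have hprod := (hlim κ₁).mul ((Complex.continuous_conj.tendsto _).comp (hlim κ₂))
  have hre := (Complex.continuous_re.tendsto _).comp hprod
  simp only [Complex.ofRealHom_eq_coe, Complex.conj_ofReal, ← Complex.ofReal_mul,
    Complex.ofReal_re] at hre
  filter_upwards [hre.eventually_lt_const h, hl (eventually_ne_atTop 0)] with s hneg hs
  set c : ℝ := (-(4 * s ^ 2 * ‖resonanceNumber s‖⁻¹)) ^ Fintype.card (Fin m)
  have hfactor (a b : ℂ) :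
      (c * a * starRingEnd ℂ (c * b)).re = c ^ 2 * (a * starRingEnd ℂ b).re := by
    rw [map_mul, Complex.conj_ofReal, mul_mul_mul_comm, ← Complex.ofReal_mul,
      Complex.re_ofReal_mul, sq]
  have hphases := neg_of_mul_neg_right ((hfactor _ _).symm.trans_lt hneg) (sq_nonneg c)
  obtain ⟨φ, hφ⟩ :=
    exists_det_sub_exp_eq_zero (map_conj_monodromy_mul_self hQ hper hPT s) hphases
  exact sq_mem_SpecLQ_of_det_eq_zero hQ hper hs hφ

/-- Every limit direction of `resonanceNumber` either makes the characteristic determinants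
change sign or is one of the finitely many resonant directions given by the eigenvalues of `B`. -/
theorem eventually_sq_mem_SpecLQ {μj ε : ℝ} (hodd : Odd (B.charpoly.rootMultiplicity μj))
    (hε : 0 < ε) :
    ∀ᶠ s : ℝ in atTop, (∀ μ ∈ B.charpoly.roots,
      ε ≤ |s ^ 2 - (round s : ℝ) ^ 2 - (μj + μ) / (2 * Real.pi)|) → (s : ℂ) ^ 2 ∈ SpecLQ Q := by
  have hχ : B.charpoly ≠ 0 := B.charpoly_monic.ne_zero
  obtain ⟨η, hsign, hηε, hη⟩ := ((eventually_eval_sub_mul_eval_add_neg hχ hodd).and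
    (Ioo_mem_nhdsGT hε)).exists
  refine mem_iff_ultrafilter.mpr fun l hl => ?_
  have hsphere : ∀ᶠ s in (l : Filter ℝ), resonanceDirection s ∈ sphere (0 : ℂ) 1 :=
    hl ((eventually_ne_atTop 0).mono fun s hs => by simp [norm_resonanceDirection hs])
  obtain ⟨u, hu1, hu : Tendsto resonanceDirection l (𝓝 u)⟩ :=
    (isCompact_sphere (0 : ℂ) 1).ultrafilter_le_nhds' (l.map resonanceDirection) hsphere
  by_cases hdet : limitDet B u.re u.im (μj - η) * limitDet B u.re u.im (μj + η) < 0
  · filter_upwards [eventually_sq_mem_SpecLQ_of_limitDet_mul_neg hQ hper hPT hB hl hu hdet]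
      with s hs _ using hs
  have hpq : u.re = 0 → u.im ≠ 0 := fun h0 h1 => by
    rw [Complex.ext (w := 0) h0 h1, mem_sphere_zero_iff_norm, norm_zero] at hu1
    exact zero_ne_one hu1
  obtain ⟨hre, κ, hκ, hroot⟩ :=
    exists_isRoot_of_limitDet_mul_nonneg B hpq hsign (not_lt.mp hdet)
  have hlim := ((tendsto_sq_sub_round_sq hl hu hre).sub_const
    ((μj + (u.im / u.re - κ)) / (2 * Real.pi))).abs
  have hlt : |u.im / u.re / (2 * Real.pi) - (μj + (u.im / u.re - κ)) / (2 * Real.pi)| < ε := by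
    have hdiff : u.im / u.re / (2 * Real.pi) - (μj + (u.im / u.re - κ)) / (2 * Real.pi) =
        (κ - μj) / (2 * Real.pi) := by ring
    rw [uIcc_of_le (by linarith)] at hκ
    have hκη : |κ - μj| ≤ η := abs_le.mpr ⟨by linarith [hκ.1], by linarith [hκ.2]⟩
    rw [hdiff, abs_div, abs_of_pos Real.two_pi_pos]
    exact (div_le_self (abs_nonneg _) (by linarith [Real.pi_gt_three])).trans_lt (hκη.trans_lt hη)
  filter_upwards [hlim.eventually_lt_const hlt] with s hs hfar
  exact absurd (hfar _ ((Polynomial.mem_roots hχ).mpr hroot)) (not_le.mpr hs)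

end Spectrum

/-! ### Packing the spectrum by intervals -/

section Packing

/-- A finite family of pairwise disjoint nonempty compact intervals `[x.1, x.2]` contained in `S`,
encoded by the pairs of their endpoints. -/
structure IsIntervalPacking (F : Finset (ℝ × ℝ)) (S : Set ℝ) : Prop where
  le : ∀ x ∈ F, x.1 ≤ x.2
  pairwiseDisjoint : (F : Set (ℝ × ℝ)).PairwiseDisjoint fun x => Icc x.1 x.2
  subset : ∀ x ∈ F, Icc x.1 x.2 ⊆ S

/-- The total length of a family of intervals given by the pairs of their endpoints. -/
def totalLength (F : Finset (ℝ × ℝ)) : ℝ := ∑ x ∈ F, (x.2 - x.1)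

variable {F : Finset (ℝ × ℝ)} {S T : Set ℝ}

theorem isIntervalPacking_empty (S : Set ℝ) : IsIntervalPacking ∅ S where
  le := by simp
  pairwiseDisjoint := by simp
  subset := by simp

theorem IsIntervalPacking.mono (hF : IsIntervalPacking F S) (hST : S ⊆ T) :
    IsIntervalPacking F T :=
  ⟨hF.le, hF.pairwiseDisjoint, fun x hx => (hF.subset x hx).trans hST⟩

theorem IsIntervalPacking.insert_Icc (hF : IsIntervalPacking F S) {u v : ℝ} (huv : u ≤ v)
    (hST : Disjoint S (Icc u v)) : IsIntervalPacking (insert (u, v) F) (S ∪ Icc u v) where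
  le := Finset.forall_mem_insert _ _ _ |>.mpr ⟨huv, hF.le⟩
  pairwiseDisjoint := by
    rw [Finset.coe_insert]
    exact hF.pairwiseDisjoint.insert fun x hx _ => (hST.mono_left (hF.subset x hx)).symm
  subset := Finset.forall_mem_insert _ _ _ |>.mpr
    ⟨subset_union_right, fun x hx => (hF.subset x hx).trans subset_union_left⟩

theorem IsIntervalPacking.totalLength_nonneg (hF : IsIntervalPacking F S) : 0 ≤ totalLength F :=
  Finset.sum_nonneg fun x hx => sub_nonneg.mpr (hF.le x hx)

theorem IsIntervalPacking.totalLength_insert_Icc (hF : IsIntervalPacking F S) {u v : ℝ}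
    (huv : u ≤ v) (hST : Disjoint S (Icc u v)) :
    totalLength (insert (u, v) F) = v - u + totalLength F :=
  Finset.sum_insert fun h =>
    disjoint_left.mp hST (hF.subset _ h (left_mem_Icc.mpr huv)) (left_mem_Icc.mpr huv)

theorem IsIntervalPacking.exists_fin (hF : IsIntervalPacking F S) :
    ∃ (l : ℕ) (a b : Fin l → ℝ), (∀ i, a i ≤ b i) ∧
      (∀ i j, i ≠ j → Disjoint (Icc (a i) (b i)) (Icc (a j) (b j))) ∧
      (∀ i, Icc (a i) (b i) ⊆ S) ∧ ∑ i, (b i - a i) = totalLength F := by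
  let e := F.equivFin.symm
  refine ⟨F.card, fun i => (e i).1.1, fun i => (e i).1.2, fun i => hF.le _ (e i).2,
    fun i j hij => hF.pairwiseDisjoint (e i).2 (e j).2 fun h => hij (e.injective (Subtype.ext h)),
    fun i => hF.subset _ (e i).2, ?_⟩
  rw [totalLength, ← Finset.sum_coe_sort F]
  exact e.sum_comp fun x : F => x.1.2 - x.1.1

theorem Icc_min_diff_balls_subset (a b ε p : ℝ) (P : Finset ℝ) :
    Icc a (min b (p - ε)) \ ⋃ q ∈ P, ball q ε ⊆ Icc a b \ ⋃ q ∈ insert p P, ball q ε := by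
  intro z hz
  simp only [Set.mem_sdiff, mem_Icc, le_min_iff, mem_iUnion, Finset.mem_insert,
    exists_prop, mem_ball, Real.dist_eq, not_exists, not_and, not_lt, forall_eq_or_imp] at hz ⊢
  exact ⟨⟨hz.1.1, hz.1.2.1⟩, le_abs.mpr (.inr (by linarith [hz.1.2.2])), hz.2⟩

theorem Icc_max_subset_Icc_diff_balls (a b ε : ℝ) {p : ℝ} {P : Finset ℝ} (hP : ∀ q ∈ P, q ≤ p) :
    Icc (max a (p + ε)) b ⊆ Icc a b \ ⋃ q ∈ P, ball q ε := by
  intro z hz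
  simp only [Set.mem_sdiff, mem_Icc, max_le_iff, mem_iUnion, exists_prop, mem_ball,
    Real.dist_eq, not_exists, not_and, not_lt] at hz ⊢
  exact ⟨⟨hz.1.1, hz.2⟩, fun q hq => le_abs.mpr (.inl (by linarith [hz.1.2, hP q hq]))⟩

theorem exists_isIntervalPacking_Icc_diff_balls {ε : ℝ} (hε : 0 < ε) (P : Finset ℝ) (a b : ℝ) :
    ∃ F, IsIntervalPacking F (Icc a b \ ⋃ p ∈ P, ball p ε) ∧
      b - a - 2 * ε * P.card ≤ totalLength F := by
  induction P using Finset.induction_on_max generalizing b with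
  | empty =>
    rcases le_total a b with hab | hba
    · exact ⟨{(a, b)}, ⟨by simpa using hab, by simp, by simp⟩, by simp [totalLength]⟩
    · exact ⟨∅, isIntervalPacking_empty _, by simpa [totalLength] using hba⟩
  | insert p P hmax ih =>
    obtain ⟨F, hF, hlength⟩ := ih (min b (p - ε))
    have hleft := Icc_min_diff_balls_subset a b ε p P
    rw [Finset.card_insert_of_notMem fun h => (hmax p h).false, Nat.cast_succ, mul_add_one]
    have hmin := min_choice b (p - ε)
    have hnonneg := hF.totalLength_nonneg
    have hcard : 0 ≤ 2 * ε * P.card := by positivity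
    rcases lt_or_ge b (max a (p + ε)) with hb | hb
    · refine ⟨F, hF.mono hleft, ?_⟩
      rcases lt_max_iff.mp hb with h | h <;> rcases hmin with h' | h' <;> linarith
    have hright := Icc_max_subset_Icc_diff_balls a b ε (p := p) (P := insert p P)
      (Finset.forall_mem_insert _ _ _ |>.mpr ⟨le_rfl, fun q hq => (hmax q hq).le⟩)
    have hdisj : Disjoint (Icc a (min b (p - ε)) \ ⋃ q ∈ P, ball q ε)
        (Icc (max a (p + ε)) b) :=
      disjoint_left.mpr fun z hz hz' => by
        linarith [hz.1.2.trans (min_le_right _ _), (le_max_right _ _).trans hz'.1]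
    refine ⟨_, (hF.insert_Icc hb hdisj).mono (union_subset hleft hright), ?_⟩
    rw [hF.totalLength_insert_Icc hb hdisj]
    have hpb : p + ε ≤ b := (le_max_right _ _).trans hb
    rw [min_eq_right (by linarith)] at hlength
    rcases max_choice a (p + ε) with h | h <;> linarith

end Packing

theorem exists_tendsto_zero_of_eventually {P : ℕ → ℝ → Prop} (hmono : ∀ k, Monotone (P k))
    (h : ∀ δ > 0, ∀ᶠ k in atTop, P k δ) :
    ∃ δ : ℕ → ℝ, (∀ k, 0 < δ k) ∧ Tendsto δ atTop (𝓝 0) ∧ ∀ᶠ k in atTop, P k (δ k) := by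
  set c : ℕ → ℝ := fun k => sInf {δ | 0 < δ ∧ P k δ}
  have hbdd (k : ℕ) : BddBelow {δ | 0 < δ ∧ P k δ} := ⟨0, fun δ hδ => hδ.1.le⟩
  have hc (k : ℕ) : 0 ≤ c k := Real.sInf_nonneg fun δ hδ => hδ.1.le
  have hstep (k : ℕ) : c k < c k + 1 / ((k : ℝ) + 1) := lt_add_of_pos_right _ (by positivity)
  have hlim : Tendsto c atTop (𝓝 0) := by
    refine tendsto_order.mpr ⟨fun x hx => .of_forall fun k => hx.trans_le (hc k), fun x hx => ?_⟩
    filter_upwards [h (x / 2) (half_pos hx)] with k hk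
    exact (csInf_le (hbdd k) ⟨half_pos hx, hk⟩).trans_lt (half_lt_self hx)
  refine ⟨fun k => c k + 1 / ((k : ℝ) + 1), fun k => (hc k).trans_lt (hstep k),
    by simpa using hlim.add tendsto_one_div_add_atTop_nhds_zero_nat, ?_⟩
  filter_upwards [h 1 one_pos] with k hk
  have hne : {δ | 0 < δ ∧ P k δ}.Nonempty := ⟨1, one_pos, hk⟩
  obtain ⟨δ, hδ, hlt⟩ := exists_lt_of_csInf_lt hne (hstep k)
  exact hmono k hlt.le hδ.2

section SpectralPacking

variable {m : ℕ} {Q : ℝ → Matrix (Fin m) (Fin m) ℂ} {B : Matrix (Fin m) (Fin m) ℝ}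

/-- The real spectrum of `L(Q)` contains finitely many disjoint compact intervals that cover
`(μ + (2k - 1)², μ + (2k + 1)²]` up to length `δ`. -/
def HasSpectralPacking (Q : ℝ → Matrix (Fin m) (Fin m) ℂ) (μ : ℝ) (k : ℕ) (δ : ℝ) : Prop :=
  ∃ F, IsIntervalPacking F ({x : ℝ | (x : ℂ) ∈ SpecLQ Q} ∩
      Ioc (μ + (2 * (k : ℝ) - 1) ^ 2) (μ + (2 * (k : ℝ) + 1) ^ 2)) ∧
    μ + (2 * (k : ℝ) + 1) ^ 2 - (μ + (2 * (k : ℝ) - 1) ^ 2) - totalLength F < δ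

theorem monotone_hasSpectralPacking (Q : ℝ → Matrix (Fin m) (Fin m) ℂ) (μ : ℝ) (k : ℕ) :
    Monotone (HasSpectralPacking Q μ k) :=
  fun _ _ hδ ⟨F, hF, hlt⟩ => ⟨F, hF, hlt.trans_le hδ⟩

theorem round_sqrt_mem_Icc {μ x : ℝ} {k : ℕ} (hk : |μ| + 2 ≤ 2 * (k : ℝ))
    (hx : x ∈ Icc (μ + (2 * (k : ℝ) - 1) ^ 2) (μ + (2 * (k : ℝ) + 1) ^ 2)) :
    round √x ∈ Finset.Icc (2 * (k : ℤ) - 1) (2 * k + 1) := by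
  obtain ⟨hμ, hμ'⟩ := abs_le.mp (le_sub_iff_add_le.mpr hk)
  have hlower : 2 * (k : ℝ) - 3 / 2 ≤ √x := Real.le_sqrt_of_sq_le (by nlinarith [hx.1])
  have hupper : √x < 2 * (k : ℝ) + 3 / 2 :=
    (Real.sqrt_lt' (by positivity)).mpr (by nlinarith [hx.2])
  rw [Finset.mem_Icc, round_eq]
  constructor
  · rw [Int.le_floor]
    push_cast
    linarith
  · rw [← Int.lt_add_one_iff, Int.floor_lt]
    push_cast
    linarith

/-- The points `n² + (μj + μ) / (2π)` with `μ` an eigenvalue of `B`, for the `n = round √x` that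
occur for `x` in `(μj + (2k - 1)², μj + (2k + 1)²]`: the spectrum may be missed near them. -/
def resonantPoints (B : Matrix (Fin m) (Fin m) ℝ) (μj : ℝ) (k : ℕ) : Finset ℝ :=
  (Finset.Icc (2 * (k : ℤ) - 1) (2 * k + 1) ×ˢ B.charpoly.roots.toFinset).image
    fun x => (x.1 : ℝ) ^ 2 + (μj + x.2) / (2 * Real.pi)

theorem card_resonantPoints_le (B : Matrix (Fin m) (Fin m) ℝ) (μj : ℝ) (k : ℕ) :
    (resonantPoints B μj k).card ≤ 3 * m := by
  have hroots : B.charpoly.roots.toFinset.card ≤ m :=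
    (Multiset.toFinset_card_le _).trans
      ((Polynomial.card_roots' _).trans_eq (by simp))
  have hIcc : (Finset.Icc (2 * (k : ℤ) - 1) (2 * k + 1)).card = 3 := by
    rw [Int.card_Icc]
    lia
  calc (resonantPoints B μj k).card
      ≤ 3 * B.charpoly.roots.toFinset.card := by
        rw [← hIcc, ← Finset.card_product]
        exact Finset.card_image_le
    _ ≤ 3 * m := by gcongr

attribute [local instance] Matrix.linftyOpNormedRing Matrix.linftyOpNormedAlgebra

section Asymptotics

variable (hQ : Continuous Q) (hper : Function.Periodic Q Real.pi)
  (hPT : ∀ x, (Q (-x)).map (starRingEnd ℂ) = Q x)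
  (hB : ∫ x in (0 : ℝ)..Real.pi, Q x = B.map Complex.ofRealHom)

include hQ hper hPT hB

theorem eventually_Ioc_diff_balls_resonantPoints_subset {μj ε : ℝ}
    (hodd : Odd (B.charpoly.rootMultiplicity μj)) (hε : 0 < ε) :
    ∀ᶠ k : ℕ in atTop, Ioc (μj + (2 * (k : ℝ) - 1) ^ 2) (μj + (2 * (k : ℝ) + 1) ^ 2) \
      ⋃ p ∈ resonantPoints B μj k, ball p ε ⊆ {x : ℝ | (x : ℂ) ∈ SpecLQ Q} := by
  obtain ⟨s₀, hs₀⟩ := eventually_atTop.mp (eventually_sq_mem_SpecLQ hQ hper hPT hB hodd hε)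
  filter_upwards [tendsto_natCast_atTop_atTop.eventually_ge_atTop (|μj| + 2),
    tendsto_natCast_atTop_atTop.eventually_ge_atTop (s₀ + 2)] with k hkμ hks x ⟨hx, hfar⟩
  have hround := round_sqrt_mem_Icc (by linarith [abs_nonneg μj]) (Ioc_subset_Icc_self hx)
  have hle : 2 * (k : ℝ) - 1 ≤ round √x := mod_cast (Finset.mem_Icc.mp hround).1
  have hsqrt : 2 * (k : ℝ) - 3 / 2 ≤ √x := by linarith [(abs_le.mp (abs_sub_round √x)).1]
  have hx0 : 0 < x := Real.sqrt_pos.mp (by linarith [abs_nonneg μj])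
  have hspec := hs₀ √x (by linarith [abs_nonneg μj]) fun μ hμ => by
    have hmem : (round √x : ℝ) ^ 2 + (μj + μ) / (2 * Real.pi) ∈ resonantPoints B μj k :=
      Finset.mem_image.mpr
        ⟨(round √x, μ), Finset.mk_mem_product hround (Multiset.mem_toFinset.mpr hμ), rfl⟩
    rw [Real.sq_sqrt hx0.le, sub_sub, ← Real.dist_eq]
    exact not_lt.mp fun h => hfar (mem_biUnion hmem h)
  rwa [← Complex.ofReal_pow, Real.sq_sqrt hx0.le] at hspec

theorem eventually_hasSpectralPacking {μj δ : ℝ}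
    (hodd : Odd (B.charpoly.rootMultiplicity μj)) (hδ : 0 < δ) :
    ∀ᶠ k : ℕ in atTop, HasSpectralPacking Q μj k δ := by
  obtain ⟨ε, hε, hεδ⟩ : ∃ ε > 0, ε + 2 * ε * (3 * m : ℕ) < δ :=
    ⟨δ / (6 * m + 2), by positivity, by push_cast; field_simp; linarith⟩
  filter_upwards [eventually_Ioc_diff_balls_resonantPoints_subset hQ hper hPT hB hodd hε] with k hk
  obtain ⟨F, hF, hlength⟩ := exists_isIntervalPacking_Icc_diff_balls hε (resonantPoints B μj k)
    (μj + (2 * (k : ℝ) - 1) ^ 2 + ε) (μj + (2 * (k : ℝ) + 1) ^ 2)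
  refine ⟨F, hF.mono fun x ⟨hx, hfar⟩ => ?_, ?_⟩
  · have hx' : x ∈ Ioc (μj + (2 * (k : ℝ) - 1) ^ 2) (μj + (2 * (k : ℝ) + 1) ^ 2) :=
      ⟨by linarith [hx.1], hx.2⟩
    exact ⟨hk ⟨hx', hfar⟩, hx'⟩
  · have hcard : 2 * ε * ((resonantPoints B μj k).card : ℝ) ≤ 2 * ε * (3 * m : ℕ) := by
      gcongr
      exact card_resonantPoints_le B μj k
    linarith

end Asymptotics

end SpectralPacking

section MeanMatrix

attribute [local instance] Matrix.linftyOpNormedRing Matrix.linftyOpNormedAlgebra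

variable {m : ℕ} {Q : ℝ → Matrix (Fin m) (Fin m) ℂ}

theorem meanMatrix_eq_intervalIntegral (hQ : Continuous Q) :
    meanMatrix Q = ∫ x in (0 : ℝ)..Real.pi, Q x :=
  Matrix.ext fun i j => (intervalIntegral_matrix_apply hQ 0 Real.pi i j).symm

end MeanMatrix

/-- if `A` has a real eigenvalue `μ_j` of odd algebraic multiplicity,
then for every large `k` the interval `Γ_{k,j} = (μ_j + (2k-1)², μ_j + (2k+1)²]`
contains finitely many pairwise disjoint closed subintervals lying in the real spectrum
of `L(Q)`, of total length within `c₁₁ δ_k` of the length of `Γ_{k,j}`. -/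
theorem statement16 {m : ℕ} (hm : 1 ≤ m) (Q : ℝ → Matrix (Fin m) (Fin m) ℂ)
    (hQcont : Continuous Q)
    (hQper : ∀ x : ℝ, Q (x + Real.pi) = Q x)
    (hQPT : ∀ (x : ℝ) (i j : Fin m), (starRingEnd ℂ) (Q (-x) i j) = Q x i j)
    (μj : ℝ) (hμj : ((meanMatrix Q).charpoly).IsRoot (μj : ℂ))
    (hodd : Odd (((meanMatrix Q).charpoly).rootMultiplicity (μj : ℂ))) :
    ∃ N : ℕ, 0 < N ∧ ∃ c₁₁ : ℝ, 0 < c₁₁ ∧ ∃ δ : ℕ → ℝ, (∀ k, 0 < δ k) ∧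
      Filter.Tendsto δ Filter.atTop (nhds 0) ∧
      ∀ k : ℕ, N ≤ k → ∃ l : ℕ, ∃ a b : Fin l → ℝ,
        (∀ i, a i ≤ b i) ∧
        (∀ i i', i ≠ i' → Disjoint (Set.Icc (a i) (b i)) (Set.Icc (a i') (b i'))) ∧
        (∀ i, Set.Icc (a i) (b i) ⊆ {x : ℝ | ((x : ℂ)) ∈ SpecLQ Q}) ∧
        (∀ i, Set.Icc (a i) (b i) ⊆
          Set.Ioc (μj + (2 * (k : ℝ) - 1) ^ 2) (μj + (2 * (k : ℝ) + 1) ^ 2)) ∧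
        ((μj + (2 * (k : ℝ) + 1) ^ 2) - (μj + (2 * (k : ℝ) - 1) ^ 2)) -
            (∑ i, (b i - a i)) < c₁₁ * δ k := by
  have hper : Function.Periodic Q Real.pi := hQper
  have hPT (x : ℝ) : (Q (-x)).map (starRingEnd ℂ) = Q x := Matrix.ext (hQPT x)
  obtain ⟨B, hB⟩ := exists_intervalIntegral_eq_map_ofReal hQcont hper hPT
  rw [meanMatrix_eq_intervalIntegral hQcont, hB, Matrix.charpoly_map, ← Complex.ofRealHom_eq_coe,
    ← Polynomial.eq_rootMultiplicity_map Complex.ofRealHom.injective] at hodd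
  obtain ⟨δ, hδ, hlim, hpack⟩ := exists_tendsto_zero_of_eventually
    (monotone_hasSpectralPacking Q μj)
    fun δ hδ => eventually_hasSpectralPacking hQcont hper hPT hB hodd hδ
  obtain ⟨N, hN⟩ := eventually_atTop.mp hpack
  refine ⟨N + 1, N.succ_pos, 1, one_pos, δ, hδ, hlim, fun k hk => ?_⟩
  obtain ⟨F, hF, hlt⟩ := hN k (N.le_succ.trans hk)
  obtain ⟨l, a, b, hab, hdisj, hsub, hsum⟩ := hF.exists_fin
  exact ⟨l, a, b, hab, hdisj, fun i => (hsub i).trans inter_subset_left,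
    fun i => (hsub i).trans inter_subset_right, by rwa [hsum, one_mul]⟩
end
end
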